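/- Every continuous map T : [0,1] → [0,1] with zero topological entropy is Möbius orthogonal: for every continuous f : [0,1] → ℂ and every x ∈ [0,1], lim_{N→∞} (1/N) Σ_{n≤N} f(T^n x) μ(n) = 0. -/

import Mathlib

open Filter Topology unitInterval

open MeasureTheory FourierTransform in
theorem tb_kernel (g : ℝ → ℂ) (hgm : Measurable g) (hg1 : ∀ u, ‖g u‖ ≤ 1) (hg0 : ∀ u < 0, g u = 0)
    (G : ℂ → ℂ) (hG : ContinuousOn G {s | 0 ≤ s.re})
    (hgG : ∀ s : ℂ, 0 < s.re → ∫ u : ℝ, g u * Complex.exp (-s * u) = G s)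
    (ψ : ℝ → ℂ) (hψ : Continuous ψ) (hψc : HasCompactSupport ψ) (hψF : Integrable (𝓕 ψ)) :
    ∫ u : ℝ, g u * 𝓕 ψ u = ∫ ξ : ℝ, G (2 * Real.pi * ξ * Complex.I) * ψ ξ := by
  have hψi : Integrable ψ := hψ.integrable_of_hasCompactSupport hψc
  have hgi : ∀ δ : ℝ, 0 < δ → Integrable (fun u : ℝ => g u * Complex.exp (-δ * u)) := by
    intro δ hδ
    have h1 : Integrable (Set.indicator (Set.Ici (0:ℝ)) (fun u : ℝ => Real.exp (-δ * u))) := by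
      rw [integrable_indicator_iff measurableSet_Ici, integrableOn_Ici_iff_integrableOn_Ioi]
      exact exp_neg_integrableOn_Ioi 0 hδ
    refine h1.mono' ?_ ?_
    · exact (hgm.mul (by fun_prop)).aestronglyMeasurable
    · refine Eventually.of_forall fun u => ?_
      by_cases hu : 0 ≤ u
      · rw [Set.indicator_of_mem (by exact hu), norm_mul, Complex.norm_exp]
        have := mul_le_mul_of_nonneg_right (hg1 u) (Real.exp_nonneg (-δ * u))
        simpa using this
      · rw [hg0 u (not_le.mp hu)]
        simp only [zero_mul, norm_zero]
        exact Set.indicator_nonneg (fun _ _ => (Real.exp_nonneg _)) _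
  have key : ∀ δ : ℝ, 0 < δ → ∫ ξ : ℝ, G (δ + 2 * Real.pi * ξ * Complex.I) * ψ ξ
      = ∫ u : ℝ, (g u * Complex.exp (-δ * u)) * 𝓕 ψ u := by
    intro δ hδ
    have h := VectorFourier.integral_fourierIntegral_smul_eq_flip (L := innerₗ ℝ)
      (e := Real.fourierChar) (μ := volume) (ν := volume)
      Real.continuous_fourierChar continuous_inner (hgi δ hδ) hψi
    rw [flip_innerₗ] at h
    change ∫ ξ, 𝓕 (fun u : ℝ => g u * Complex.exp (-δ * u)) ξ • ψ ξ = ∫ u : ℝ, (g u * Complex.exp (-δ * u)) • 𝓕 ψ u at h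
    simp only [smul_eq_mul] at h
    rw [← h]
    congr 1; ext ξ
    congr 1
    rw [Real.fourier_real_eq_integral_exp_smul, ← hgG _ (by simpa using hδ)]
    congr 1; ext u
    rw [smul_eq_mul, mul_left_comm, ← Complex.exp_add]
    congr 2
    push_cast; ring
  have hd : Tendsto (fun n : ℕ => (1 / ((n:ℝ) + 1))) atTop (𝓝 0) := tendsto_one_div_add_atTop_nhds_zero_nat
  have L1 : Tendsto (fun n : ℕ => ∫ u : ℝ, (g u * Complex.exp (-((1 / ((n:ℝ) + 1) : ℝ) : ℂ) * u)) * 𝓕 ψ u) atTop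
      (𝓝 (∫ u : ℝ, g u * 𝓕 ψ u)) := by
    refine tendsto_integral_of_dominated_convergence (fun u => ‖𝓕 ψ u‖) ?_ hψF.norm ?_ ?_
    · intro n
      exact ((hgm.mul (by fun_prop)).aestronglyMeasurable).mul hψF.1
    · intro n
      refine Eventually.of_forall fun u => ?_
      rw [norm_mul]
      refine mul_le_of_le_one_left (norm_nonneg _) ?_
      by_cases hu : 0 ≤ u
      · rw [norm_mul, Complex.norm_exp]
        refine mul_le_one₀ (hg1 u) (Real.exp_nonneg _) ?_
        rw [Real.exp_le_one_iff]
        have h3 : (0:ℝ) ≤ 1 / ((n:ℝ) + 1) * u := by positivity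
        have h4 : (-((1 / ((n:ℝ) + 1) : ℝ) : ℂ) * (u:ℂ)) = ((-(1 / ((n:ℝ) + 1) * u) : ℝ) : ℂ) := by
          push_cast; ring
        rw [h4, Complex.ofReal_re]
        linarith
      · rw [hg0 u (not_le.mp hu)]
        simp
    · refine Eventually.of_forall fun u => ?_
      have : Tendsto (fun n : ℕ => (g u * Complex.exp (-((1 / ((n:ℝ) + 1) : ℝ) : ℂ) * u)) * 𝓕 ψ u) atTop
        (𝓝 ((g u * Complex.exp (-((0:ℝ) : ℂ) * u)) * 𝓕 ψ u)) := by
        refine Tendsto.mul_const _ (Tendsto.const_mul _ ?_)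
        have hc : Continuous (fun d : ℝ => Complex.exp (-(d : ℂ) * u)) := by fun_prop
        exact (hc.tendsto 0).comp hd
      simpa using this
  have L2 : Tendsto (fun n : ℕ => ∫ ξ : ℝ, G (((1 / ((n:ℝ) + 1) : ℝ) : ℂ) + 2 * Real.pi * ξ * Complex.I) * ψ ξ) atTop
      (𝓝 (∫ ξ : ℝ, G (2 * Real.pi * ξ * Complex.I) * ψ ξ)) := by
    set Φ : ℝ × ℝ → ℂ := fun p => (p.1 : ℂ) + 2 * Real.pi * p.2 * Complex.I with hΦ
    have hΦc : Continuous Φ := by fun_prop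
    have hK : IsCompact (Set.Icc (0:ℝ) 1 ×ˢ tsupport ψ) := isCompact_Icc.prod hψc
    have hGΦ : ContinuousOn (G ∘ Φ) {p | 0 ≤ p.1} := by
      refine hG.comp hΦc.continuousOn ?_
      intro p hp
      simpa [hΦ] using hp
    have hcs : ∀ d : ℝ, 0 ≤ d → Continuous (fun ξ : ℝ => G (Φ (d, ξ))) := by
      intro d hd
      rw [← continuousOn_univ]
      refine hGΦ.comp (f := fun ξ : ℝ => (d, ξ)) (by fun_prop) ?_
      intro ξ _
      simpa using hd
    obtain ⟨C, hC⟩ := hK.exists_bound_of_continuousOn (hGΦ.mono (fun p hp => hp.1.1))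
    have hC0 : 0 ≤ max C 0 := le_max_right _ _
    refine tendsto_integral_of_dominated_convergence (fun ξ => max C 0 * ‖ψ ξ‖) ?_ (hψi.norm.const_mul _) ?_ ?_
    · intro n
      exact ((hcs _ (by positivity)).mul hψ).aestronglyMeasurable
    · intro n
      refine Eventually.of_forall fun ξ => ?_
      rw [norm_mul]
      by_cases hξ : ξ ∈ tsupport ψ
      · refine mul_le_mul_of_nonneg_right ?_ (norm_nonneg _)
        refine le_trans (hC ((1 / ((n:ℝ) + 1)), ξ) ⟨⟨by positivity, ?_⟩, hξ⟩) (le_max_left _ _)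
        rw [div_le_one (by positivity)]
        simp
      · rw [image_eq_zero_of_notMem_tsupport hξ]; simp
    · refine Eventually.of_forall fun ξ => ?_
      refine Tendsto.mul_const _ ?_
      have h1 : ContinuousWithinAt (fun d : ℝ => G (Φ (d, ξ))) (Set.Ici 0) 0 := by
        have : ContinuousOn (fun d : ℝ => G (Φ (d, ξ))) (Set.Ici 0) := by
          refine hGΦ.comp (f := fun d : ℝ => (d, ξ)) (by fun_prop) ?_
          intro d hd
          simpa using hd
        exact this 0 (by simp)
      have h2 : Tendsto (fun n : ℕ => (1 / ((n:ℝ) + 1))) atTop (𝓝[Set.Ici 0] 0) :=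
        tendsto_nhdsWithin_iff.mpr ⟨hd, Eventually.of_forall fun n => by simp; positivity⟩
      have := h1.tendsto.comp h2
      simpa [hΦ, Function.comp_def] using this
  refine tendsto_nhds_unique L1 (L2.congr fun n => ?_)
  exact key _ (by positivity)

open MeasureTheory FourierTransform in
theorem tb_tauber (g : ℝ → ℂ) (hgm : Measurable g) (hg1 : ∀ u, ‖g u‖ ≤ 1) (hg0 : ∀ u < 0, g u = 0)
    (G : ℂ → ℂ) (hG : ContinuousOn G {s | 0 ≤ s.re})
    (hgG : ∀ s : ℂ, 0 < s.re → ∫ u : ℝ, g u * Complex.exp (-s * u) = G s)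
    (hslow : ∀ v w : ℝ, 0 ≤ v → v ≤ w → ‖g w - g v‖ ≤ 2 * (w - v) + Real.exp (-v)) :
    Tendsto g atTop (𝓝 0) := by
  obtain ⟨b⟩ : Nonempty (ContDiffBump (0:ℝ)) := inferInstance
  set φ : ℝ → ℂ := fun ξ => ((b ξ : ℝ) : ℂ) with hφdef
  have hφs : ContDiff ℝ (⊤ : ℕ∞) φ := Complex.ofRealCLM.contDiff.comp b.contDiff
  have hφc : HasCompactSupport φ := b.hasCompactSupport.comp_left (g := fun x : ℝ => (x : ℂ)) (by simp)
  have hφ0 : φ 0 = 1 := by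
    simp [hφdef, b.one_of_mem_closedBall (Metric.mem_closedBall_self b.rIn_pos.le)]
  set S : SchwartzMap ℝ ℂ := hφc.toSchwartzMap hφs with hS
  have hSφ : (S : ℝ → ℂ) = φ := rfl
  have hKS : ((𝓕 S : SchwartzMap ℝ ℂ) : ℝ → ℂ) = 𝓕 φ := by rw [SchwartzMap.fourier_coe, hSφ]
  have hK : Integrable (𝓕 φ) := by rw [← hKS]; exact (𝓕 S : SchwartzMap ℝ ℂ).integrable
  have hKw : Integrable (fun w : ℝ => |w| * ‖𝓕 φ w‖) := by
    have   := (𝓕 S : SchwartzMap ℝ ℂ).integrable_pow_mul volume 1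
    rw [hKS] at this
    simpa using this
  have hKc : Continuous (𝓕 φ) := by rw [← hKS]; exact (𝓕 S : SchwartzMap ℝ ℂ).continuous
  have hKint : ∫ w, 𝓕 φ w = 1 := by
    have h := Continuous.fourierInv_fourier_eq hφs.continuous (hφs.continuous.integrable_of_hasCompactSupport hφc) hK
    have h2 := congrFun h 0
    rw [hφ0, Real.fourierInv_eq'] at h2
    simpa using h2
  set C0 := ∫ w, ‖𝓕 φ w‖ with hC0
  set C1 := ∫ w : ℝ, |w| * ‖𝓕 φ w‖ with hC1
  have hC1n : 0 ≤ C1 := integral_nonneg fun w => by positivity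
  have hC0n : 0 ≤ C0 := integral_nonneg fun w => by positivity
  -- scaled, modulated test function
  have hfour : ∀ l : ℝ, 0 < l → ∀ v u : ℝ,
      𝓕 (fun ξ : ℝ => Complex.exp (2 * Real.pi * v * ξ * Complex.I) * φ (ξ / l)) u = l * 𝓕 φ (l * (u - v)) := by
    intro l hl v u
    rw [Real.fourier_real_eq_integral_exp_smul, Real.fourier_real_eq_integral_exp_smul]
    have := Measure.integral_comp_div (fun ξ : ℝ => Complex.exp (↑(-2 * Real.pi * ξ * (l * (u - v))) * Complex.I) • φ ξ) l
    rw [abs_of_pos hl, Complex.real_smul] at this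
    rw [← this]
    congr 1; ext ξ
    rw [smul_eq_mul, smul_eq_mul, ← mul_assoc, ← Complex.exp_add]
    congr 2
    have : (l:ℂ) ≠ 0 := by exact_mod_cast hl.ne'
    push_cast
    field_simp
    ring
  have hmain : ∀ l : ℝ, 0 < l → ∀ v : ℝ,
      ∫ w : ℝ, g (v + w / l) * 𝓕 φ w =
        ∫ ξ : ℝ, Real.fourierChar (-(ξ * (-v))) • (G (2 * Real.pi * ξ * Complex.I) * φ (ξ / l)) := by
    intro l hl v
    have h := tb_kernel g hgm hg1 hg0 G hG hgG
      (fun ξ : ℝ => Complex.exp (2 * Real.pi * v * ξ * Complex.I) * φ (ξ / l))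
      (by have := hφs.continuous; fun_prop)
      (by
        have : HasCompactSupport (fun ξ : ℝ => φ (ξ / l)) := by
          have := hφc.comp_homeomorph (Homeomorph.mulRight₀ (l⁻¹) (inv_ne_zero hl.ne'))
          simpa [Function.comp_def, div_eq_mul_inv] using this
        exact this.mul_left)
      (by
        have : 𝓕 (fun ξ : ℝ => Complex.exp (2 * Real.pi * v * ξ * Complex.I) * φ (ξ / l)) = fun u => (l:ℂ) * 𝓕 φ (l * (u - v)) := by
          ext u; exact hfour l hl v u
        rw [this]
        have h1 := (hK.comp_mul_left' hl.ne').comp_sub_right v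
        exact h1.const_mul _)
    have e1 : ∫ u : ℝ, g u * 𝓕 (fun ξ : ℝ => Complex.exp (2 * Real.pi * v * ξ * Complex.I) * φ (ξ / l)) u
        = ∫ w : ℝ, g (v + w / l) * 𝓕 φ w := by
      simp_rw [hfour l hl v]
      rw [← integral_add_left_eq_self _ v]
      have := Measure.integral_comp_mul_left (fun w : ℝ => g (v + w / l) * 𝓕 φ w) l
      rw [abs_of_pos (inv_pos.mpr hl)] at this
      have h2 : ∫ w : ℝ, g (v + w / l) * 𝓕 φ w = (l : ℂ) * ∫ x : ℝ, g (v + (l * x) / l) * 𝓕 φ (l * x) := by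
        rw [this, Complex.real_smul, ← mul_assoc]
        have : (l:ℂ) ≠ 0 := by exact_mod_cast hl.ne'
        push_cast
        rw [mul_inv_cancel₀ this, one_mul]
      rw [h2, ← integral_const_mul]
      congr 1; ext x
      rw [mul_div_cancel_left₀ _ hl.ne']
      simp only [add_sub_cancel_left]
      ring
    rw [← e1, h]
    congr 1; ext ξ
    rw [Circle.smul_def, Real.fourierChar_apply, smul_eq_mul, mul_left_comm]
    congr 2
    push_cast; ring_nf
  have hRL : ∀ l : ℝ, 0 < l → Tendsto (fun v : ℝ => ∫ w : ℝ, g (v + w / l) * 𝓕 φ w) atTop (𝓝 0) := by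
    intro l hl
    have h1 := Real.tendsto_integral_exp_smul_cocompact (fun ξ : ℝ => G (2 * Real.pi * ξ * Complex.I) * φ (ξ / l))
    have h2 : Tendsto (fun v : ℝ => -v) atTop (cocompact ℝ) :=
      tendsto_neg_atTop_atBot.mono_right atBot_le_cocompact
    refine (h1.comp h2).congr fun v => ?_
    rw [hmain l hl v]; rfl
  have hdiff : ∀ v h : ℝ, 0 < v → ‖g v - g (v + h)‖ ≤ 2 * |h| + Real.exp (-v/2) + 4 * |h| / v := by
    intro v h hv
    have hexp : 0 < Real.exp (-v/2) := Real.exp_pos _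
    by_cases hh : |h| ≤ v / 2
    · have h3 : 0 ≤ 4 * |h| / v := by positivity
      have h4 := abs_le.mp hh
      rcases le_total 0 h with h0 | h0
      · have := hslow v (v + h) hv.le (by linarith)
        rw [norm_sub_rev]
        rw [abs_of_nonneg h0] at *
        have h5 : Real.exp (-v) ≤ Real.exp (-v/2) := Real.exp_le_exp.mpr (by linarith)
        linarith
      · have := hslow (v + h) v (by linarith) (by linarith)
        rw [abs_of_nonpos h0] at *
        have h5 : Real.exp (-(v+h)) ≤ Real.exp (-v/2) := Real.exp_le_exp.mpr (by linarith)
        linarith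
    · have h3 : ‖g v - g (v+h)‖ ≤ 2 := (norm_sub_le _ _).trans (by linarith [hg1 v, hg1 (v+h)])
      have h4 : 2 ≤ 4 * |h| / v := by
        rw [le_div_iff₀ hv]; linarith
      have := abs_nonneg h
      linarith
  have hbound : ∀ l : ℝ, 0 < l → ∀ v : ℝ, 0 < v →
      ‖g v‖ ≤ ‖∫ w : ℝ, g (v + w / l) * 𝓕 φ w‖ + ((2 + 4 / v) / l * C1 + Real.exp (-v/2) * C0) := by
    intro l hl v hv
    have e1 : g v - ∫ w : ℝ, g (v + w / l) * 𝓕 φ w = ∫ w : ℝ, (g v - g (v + w / l)) * 𝓕 φ w := by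
      have h1 : g v = ∫ w : ℝ, g v * 𝓕 φ w := by rw [integral_const_mul, hKint, mul_one]
      conv_lhs => rw [h1]
      rw [← integral_sub]
      · congr 1; ext w; ring
      · exact hK.const_mul _
      · refine hK.bdd_mul (c := 1) ?_ ?_
        · exact (hgm.comp (by fun_prop)).aestronglyMeasurable
        · exact Eventually.of_forall fun w => hg1 _
    have e2 : ‖∫ w : ℝ, (g v - g (v + w / l)) * 𝓕 φ w‖ ≤ (2 + 4 / v) / l * C1 + Real.exp (-v/2) * C0 := by
      rw [hC1, hC0, ← integral_const_mul, ← integral_const_mul, ← integral_add (hKw.const_mul _) (hK.norm.const_mul _)]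
      refine norm_integral_le_of_norm_le ((hKw.const_mul _).add (hK.norm.const_mul _)) (Eventually.of_forall fun w => ?_)
      rw [norm_mul]
      have h1 := mul_le_mul_of_nonneg_right (hdiff v (w / l) hv) (norm_nonneg (𝓕 φ w))
      refine h1.trans (le_of_eq ?_)
      rw [abs_div, abs_of_pos hl]
      field_simp
      ring
    have e3 : g v = (∫ w : ℝ, g (v + w / l) * 𝓕 φ w) + (g v - ∫ w : ℝ, g (v + w / l) * 𝓕 φ w) := by ring
    have e4 := norm_add_le (∫ w : ℝ, g (v + w / l) * 𝓕 φ w) (g v - ∫ w : ℝ, g (v + w / l) * 𝓕 φ w)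
    rw [← e3, e1] at e4
    linarith
  rw [Metric.tendsto_atTop]
  intro ε hε
  obtain ⟨l, hl, hlε⟩ : ∃ l : ℝ, 0 < l ∧ 3 / l * C1 < ε / 3 := by
    refine ⟨9 * (C1 + 1) / ε, by positivity, ?_⟩
    rw [div_div_eq_mul_div, div_mul_eq_mul_div, div_lt_div_iff₀ (by positivity) (by positivity)]
    nlinarith
  have t1 := (Metric.tendsto_atTop.mp (hRL l hl)) (ε/3) (by positivity)
  have t2 : Tendsto (fun v : ℝ => Real.exp (-v/2) * C0) atTop (𝓝 0) := by
    have : Tendsto (fun v : ℝ => Real.exp (-(v/2)) * C0) atTop (𝓝 (0 * C0)) := by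
      refine Tendsto.mul_const _ ?_
      exact Real.tendsto_exp_neg_atTop_nhds_zero.comp (tendsto_id.atTop_div_const (by norm_num))
    simpa [neg_div] using this
  obtain ⟨N1, hN1⟩ := t1
  obtain ⟨N2, hN2⟩ := (Metric.tendsto_atTop.mp t2) (ε/3) (by positivity)
  refine ⟨max (max N1 N2) 4, fun v hv => ?_⟩
  have hv1 : N1 ≤ v := le_trans (le_max_left _ _) ((le_max_left _ _).trans hv)
  have hv2 : N2 ≤ v := le_trans (le_max_right _ _) ((le_max_left _ _).trans hv)
  have hv3 : 4 ≤ v := (le_max_right _ _).trans hv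
  have a1 := hN1 v hv1
  have a2 := hN2 v hv2
  rw [dist_zero_right] at a1 a2 ⊢
  have a3 := hbound l hl v (by linarith)
  have a4 : (2 + 4 / v) / l * C1 ≤ 3 / l * C1 := by
    have : 4 / v ≤ 1 := by rw [div_le_one (by linarith)]; exact hv3
    gcongr
    linarith
  have a5 := (le_abs_self _).trans_lt a2
  linarith

open MeasureTheory in
theorem tb_dirichlet (a : ℕ → ℂ) (ha : ∀ n, ‖a n‖ ≤ 1) (H : ℂ → ℂ)
    (hH : ContinuousOn H {s | 1 ≤ s.re}) (hL : ∀ s : ℂ, 1 < s.re → LSeries a s = H s) :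
    Tendsto (fun N : ℕ => (∑ n ∈ Finset.Icc 1 N, a n) / (N : ℂ)) atTop (𝓝 0) := by
  set A : ℝ → ℂ := fun t => ∑ k ∈ Finset.Icc 1 ⌊t⌋₊, a k with hA
  have hAn : ∀ t, 0 ≤ t → ‖A t‖ ≤ t := by
    intro t ht
    calc ‖A t‖ ≤ ∑ k ∈ Finset.Icc 1 ⌊t⌋₊, (1:ℝ) := norm_sum_le_of_le _ fun k _ => ha k
      _ = (⌊t⌋₊ : ℝ) := by simp
      _ ≤ t := Nat.floor_le ht
  have hAd : ∀ x y, 0 ≤ x → x ≤ y → ‖A y - A x‖ ≤ y - x + 1 := by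
    intro x y hx hxy
    have hf : ⌊x⌋₊ ≤ ⌊y⌋₊ := Nat.floor_mono hxy
    have e : A y - A x = ∑ k ∈ Finset.Ioc ⌊x⌋₊ ⌊y⌋₊, a k := by
      have e1 : ∀ n : ℕ, ∑ k ∈ Finset.Icc 1 n, a k = ∑ k ∈ Finset.Ioc 0 n, a k := fun n => rfl
      simp only [hA, e1]
      rw [← Finset.sum_Ioc_consecutive a (Nat.zero_le _) hf]; ring
    rw [e]
    calc _ ≤ ∑ k ∈ Finset.Ioc ⌊x⌋₊ ⌊y⌋₊, (1:ℝ) := norm_sum_le_of_le _ fun k _ => ha k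
      _ = (⌊y⌋₊ : ℝ) - ⌊x⌋₊ := by simp [Nat.cast_sub hf]
      _ ≤ _ := by
        have := Nat.floor_le (hx.trans hxy)
        have := Nat.lt_floor_add_one x
        linarith
  set g : ℝ → ℂ := fun u => if u < 0 then 0 else A (Real.exp u) * (Real.exp (-u) : ℝ) with hg
  have hgp : ∀ u, 0 ≤ u → g u = A (Real.exp u) * (Real.exp (-u) : ℝ) := fun u hu => if_neg hu.not_gt
  have hAm : Measurable A := by
    have : A = (fun n : ℕ => ∑ k ∈ Finset.Icc 1 n, a k) ∘ Nat.floor := rfl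
    rw [this]
    exact (measurable_from_nat).comp Nat.measurable_floor
  have hgm : Measurable g := by
    refine Measurable.ite measurableSet_Iio measurable_const ?_
    exact (hAm.comp Real.measurable_exp).mul (by fun_prop)
  have key := tb_tauber g hgm ?_ ?_ (fun s => H (1 + s) / (1 + s)) ?_ ?_ ?_
  · have h2 : Tendsto (fun N : ℕ => Real.log N) atTop atTop :=
      Real.tendsto_log_atTop.comp tendsto_natCast_atTop_atTop
    refine (key.comp h2).congr' ?_
    filter_upwards [eventually_ge_atTop 1] with N hN
    have hN' : (1:ℝ) ≤ N := by exact_mod_cast hN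
    simp only [Function.comp_apply]
    rw [hgp _ (Real.log_nonneg hN'), Real.exp_neg, Real.exp_log (by linarith)]
    simp [hA, div_eq_mul_inv]
  · intro u
    rcases lt_or_ge u 0 with h | h
    · simp [hg, h]
    · rw [hgp u h, norm_mul, Complex.norm_real, Real.norm_of_nonneg (Real.exp_pos _).le]
      calc _ ≤ Real.exp u * Real.exp (-u) := by gcongr; exact hAn _ (Real.exp_pos _).le
        _ = 1 := by rw [← Real.exp_add]; simp
  · intro u hu; simp [hg, hu]
  · refine ContinuousOn.div ?_ (by fun_prop) ?_
    · refine hH.comp (by fun_prop) ?_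
      intro s hs
      simp only [Set.mem_ofPred_eq, Complex.add_re, Complex.one_re] at *
      linarith
    · intro s hs h
      have := congrArg Complex.re h
      simp at this hs
      linarith
  · intro s hs
    have hs1 : 1 < (1 + s).re := by simpa using hs
    have hs0 : 1 + s ≠ 0 := by
      intro h; rw [h] at hs1; simp at hs1; linarith
    rw [eq_div_iff hs0, ← hL _ hs1]
    rw [LSeries_eq_mul_integral' a zero_le_one hs1 ?_, mul_comm]
    · congr 1
      have him : Real.exp '' (Set.Ioi 0) = Set.Ioi 1 := by
        ext t; constructor
        · rintro ⟨u, hu, rfl⟩; exact Real.one_lt_exp_iff.mpr hu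
        · intro ht
          exact ⟨Real.log t, Real.log_pos ht, Real.exp_log (lt_trans one_pos ht)⟩
      rw [← him, integral_image_eq_integral_abs_deriv_smul measurableSet_Ioi
        (fun x _ => (Real.hasDerivAt_exp x).hasDerivWithinAt) Real.exp_injective.injOn]
      have e0 : ∫ u : ℝ, g u * Complex.exp (-s * u) = ∫ u in Set.Ici (0:ℝ), g u * Complex.exp (-s * u) := by
        rw [setIntegral_eq_integral_of_forall_compl_eq_zero]
        intro u hu
        have : u < 0 := by simpa using hu
        simp [hg, this]
      rw [e0, integral_Ici_eq_integral_Ioi]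
      refine setIntegral_congr_fun measurableSet_Ioi fun u hu => ?_
      have hu0 : 0 < u := hu
      rw [hgp u hu0.le, abs_of_pos (Real.exp_pos u), Complex.real_smul]
      have e1 : ((Real.exp u : ℝ) : ℂ) ^ (-(1 + s + 1)) = Complex.exp (-(1+s+1) * u) := by
        rw [Complex.cpow_def_of_ne_zero (by exact_mod_cast (Real.exp_pos u).ne'), ← Complex.ofReal_log (Real.exp_pos u).le, Real.log_exp]
        congr 1; ring
      rw [e1, mul_left_comm, mul_assoc]
      congr 1
      rw [Complex.ofReal_exp, Complex.ofReal_exp, ← Complex.exp_add, ← Complex.exp_add]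
      congr 1; push_cast; ring
    · refine Asymptotics.IsBigO.of_bound 1 (Eventually.of_forall fun n => ?_)
      rw [Real.norm_of_nonneg (Finset.sum_nonneg fun _ _ => norm_nonneg _)]
      calc _ ≤ ∑ k ∈ Finset.Icc 1 n, (1:ℝ) := Finset.sum_le_sum fun k _ => ha k
        _ = _ := by simp
  · intro v w hv hvw
    rw [hgp v hv, hgp w (hv.trans hvw)]
    set x := Real.exp v
    set y := Real.exp w
    have hx : 0 < x := Real.exp_pos _
    have hy : 0 < y := Real.exp_pos _
    have hxy : x ≤ y := Real.exp_le_exp.mpr hvw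
    have ex : Real.exp (-v) = 1 / x := by rw [Real.exp_neg]; simp [x]
    have ey : Real.exp (-w) = 1 / y := by rw [Real.exp_neg]; simp [y]
    rw [ex, ey]
    have e : A y * ((1 / y : ℝ):ℂ) - A x * ((1/x : ℝ) : ℂ) = (A y - A x) * ((1/y:ℝ) : ℂ) + A x * ((1/y - 1/x : ℝ) : ℂ) := by
      push_cast; ring
    rw [e]
    have h1 : 1 - x / y ≤ w - v := by
      have := Real.add_one_le_exp (v - w)
      rw [Real.exp_sub] at this
      linarith
    have hinv : 1 / y ≤ 1 / x := one_div_le_one_div_of_le hx hxy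
    calc _ ≤ (y - x + 1) * (1 / y) + x * (1/x - 1/y) := by
          refine (norm_add_le _ _).trans (add_le_add ?_ ?_)
          · rw [norm_mul, Complex.norm_real, Real.norm_of_nonneg (by positivity)]
            gcongr; exact hAd _ _ hx.le hxy
          · rw [norm_mul, Complex.norm_real, Real.norm_of_nonpos (by linarith), neg_sub]
            have : 0 ≤ 1/x - 1/y := by linarith
            gcongr; exact hAn _ hx.le
      _ = 2 * (1 - x / y) + 1 / y := by field_simp; ring
      _ ≤ _ := by linarith

/-- Mean value zero. -/
def MVZ (a : ℕ → ℂ) : Prop :=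
  Tendsto (fun N : ℕ => (∑ n ∈ Finset.Icc 1 N, a n) / (N : ℂ)) atTop (𝓝 0)

theorem MVZ.sum {ι : Type*} (s : Finset ι) (a : ι → ℕ → ℂ) (h : ∀ i ∈ s, MVZ (a i)) :
    MVZ (fun n => ∑ i ∈ s, a i n) := by
  unfold MVZ at *
  have := tendsto_finsetSum s h
  simp only [Finset.sum_const_zero] at this
  refine this.congr fun N => ?_
  rw [Finset.sum_comm, Finset.sum_div]

theorem MVZ.const_mul (c : ℂ) {a : ℕ → ℂ} (h : MVZ a) : MVZ (fun n => c * a n) := by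
  unfold MVZ at *
  have := h.const_mul c
  rw [mul_zero] at this
  refine this.congr fun N => ?_
  rw [← Finset.mul_sum, mul_div_assoc]

theorem norm_moebius_le (n : ℕ) : ‖(ArithmeticFunction.moebius n : ℂ)‖ ≤ 1 := by
  have h := ArithmeticFunction.abs_moebius_le_one (n := n)
  rw [Complex.norm_intCast]
  exact_mod_cast h

theorem char_mvz {q : ℕ} [NeZero q] (χ : DirichletCharacter ℂ q) :
    MVZ (fun n => χ n * (ArithmeticFunction.moebius n : ℂ)) := by
  have hb : ∀ n : ℕ, ‖χ n * (ArithmeticFunction.moebius n : ℂ)‖ ≤ 1 := fun n => by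
    rw [norm_mul]
    exact mul_le_one₀ (χ.norm_le_one _) (norm_nonneg _) (norm_moebius_le n)
  have hLs : ∀ s : ℂ, 1 < s.re → LSeries (fun n => χ n * (ArithmeticFunction.moebius n : ℂ)) s
      = (DirichletCharacter.LFunction χ s)⁻¹ := by
    intro s hs
    have h := DirichletCharacter.LSeries.mul_mu_eq_one χ hs
    rw [DirichletCharacter.LFunction_eq_LSeries χ hs]
    exact eq_inv_of_mul_eq_one_right h
  by_cases hχ : χ = 1
  · subst hχ
    have hnz : ∀ s : ℂ, 1 ≤ s.re → DirichletCharacter.LFunctionTrivChar₁ q s ≠ 0 := by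
      intro s hs
      rcases eq_or_ne s 1 with rfl | h1
      · exact DirichletCharacter.LFunctionTrivChar₁_apply_one_ne_zero q
      · rw [DirichletCharacter.LFunctionTrivChar₁, Function.update_of_ne h1]
        exact mul_ne_zero (sub_ne_zero.mpr h1)
          (DirichletCharacter.LFunction_ne_zero_of_one_le_re _ (Or.inr h1) hs)
    refine tb_dirichlet _ hb (fun s => (s - 1) / DirichletCharacter.LFunctionTrivChar₁ q s) ?_ ?_
    · refine ContinuousOn.div (by fun_prop)
        (DirichletCharacter.differentiable_LFunctionTrivChar₁ q).continuous.continuousOn ?_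
      intro s hs
      exact hnz s hs
    · intro s hs
      have h1 : s ≠ 1 := by rintro rfl; simp at hs
      rw [hLs s hs, DirichletCharacter.LFunctionTrivChar₁, Function.update_of_ne h1,
        div_mul_eq_div_div, div_self (sub_ne_zero.mpr h1), one_div]
  · refine tb_dirichlet _ hb (fun s => (DirichletCharacter.LFunction χ s)⁻¹) ?_ hLs
    refine ContinuousOn.inv₀ ?_ ?_
    · exact fun s _ => (DirichletCharacter.differentiableAt_LFunction χ s (Or.inr hχ)).continuousAt.continuousWithinAt
    · exact fun s hs => DirichletCharacter.LFunction_ne_zero_of_one_le_re χ (Or.inl hχ) hs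

theorem odd_class_mvz (k r : ℕ) (hr : Odd r) :
    MVZ (fun n => if n % 2^k = r % 2^k then (ArithmeticFunction.moebius n : ℂ) else 0) := by
  have ha : IsUnit ((r : ℕ) : ZMod (2^k)) := by
    rw [ZMod.isUnit_iff_coprime]
    exact (Nat.Coprime.pow_right k (Nat.coprime_two_right.mpr hr))
  have h := (MVZ.sum Finset.univ (fun (χ : DirichletCharacter ℂ (2^k)) n =>
      χ ((r : ZMod (2^k))⁻¹) * (χ n * (ArithmeticFunction.moebius n : ℂ)))
      (fun χ _ => (char_mvz χ).const_mul _)).const_mul (((2^k).totient : ℂ)⁻¹)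
  convert h using 2 with n
  have e := DirichletCharacter.sum_char_inv_mul_char_eq ℂ ha (n : ZMod (2^k))
  simp_rw [← mul_assoc]
  rw [← Finset.sum_mul, e]
  have ht : ((2^k).totient : ℂ) ≠ 0 := by
    have : 0 < (2^k).totient := Nat.totient_pos.mpr (by positivity)
    exact_mod_cast this.ne'
  have hiff : (r : ZMod (2^k)) = n ↔ n % 2^k = r % 2^k := by
    rw [ZMod.natCast_eq_natCast_iff']; exact eq_comm
  simp only [hiff]
  split_ifs with h1
  · rw [← mul_assoc, inv_mul_cancel₀ ht, one_mul]
  · simp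

theorem moebius_two_mul (m : ℕ) : (ArithmeticFunction.moebius (2 * m) : ℂ) =
    if m % 2 = 1 then -(ArithmeticFunction.moebius m : ℂ) else 0 := by
  split_ifs with h
  · have hc : Nat.Coprime 2 m := by
      rw [Nat.coprime_two_left]; exact Nat.odd_iff.mpr h
    rw [ArithmeticFunction.isMultiplicative_moebius.map_mul_of_coprime hc,
      ArithmeticFunction.moebius_apply_prime Nat.prime_two]
    push_cast; ring
  · have : ¬ Squarefree (2 * m) := by
      intro hs
      have h2 : 2 * 2 ∣ 2 * m := mul_dvd_mul_left 2 (by omega)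
      have := hs 2 h2
      simp at this
    rw [ArithmeticFunction.moebius_eq_zero_of_not_squarefree this]; simp

theorem MVZ.half {b a : ℕ → ℂ} (h : MVZ b) (h0 : ∀ m, a (2 * m) = b m) (h1 : ∀ m, a (2 * m + 1) = 0) :
    MVZ a := by
  have e : ∀ N, ∑ n ∈ Finset.Icc 1 N, a n = ∑ m ∈ Finset.Icc 1 (N / 2), b m := by
    intro N
    induction N using Nat.twoStepInduction with
    | zero => simp
    | one => simpa using h1 0
    | more N ih _ =>
      rw [Finset.sum_Icc_succ_top (by omega), Finset.sum_Icc_succ_top (by omega), ih]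
      have : (N + 1 + 1) / 2 = N / 2 + 1 := by omega
      rw [this, Finset.sum_Icc_succ_top (by omega)]
      rcases Nat.even_or_odd' N with ⟨c, hc | hc⟩
      · rw [hc, h1 c, show 2 * c + 1 + 1 = 2 * (c+1) by ring, h0 (c+1)]
        simp
      · rw [hc, show 2 * c + 1 + 1 = 2 * (c+1) by ring, h0 (c+1), h1 (c+1)]
        have : (2 * c + 1)/2 = c := by omega
        simp [this]
  unfold MVZ at *
  have t : Tendsto (fun N : ℕ => N / 2) atTop atTop := Nat.tendsto_div_const_atTop (by norm_num)
  have h2 := h.comp t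
  rw [tendsto_zero_iff_norm_tendsto_zero] at h2 ⊢
  refine squeeze_zero (fun _ => norm_nonneg _) (fun N => ?_) h2
  simp only [Function.comp_apply]
  rw [e, norm_div, norm_div]
  rcases Nat.eq_zero_or_pos (N / 2) with h3 | h3
  · rw [h3]; simp
  · have h4 : (0:ℝ) < ((N/2 : ℕ) : ℝ) := by exact_mod_cast h3
    have h5 : ((N/2 : ℕ) : ℝ) ≤ N := by exact_mod_cast Nat.div_le_self N 2
    rw [Complex.norm_natCast, Complex.norm_natCast]
    gcongr

theorem class_mvz (k r : ℕ) :
    MVZ (fun n => if n % 2^k = r % 2^k then (ArithmeticFunction.moebius n : ℂ) else 0) := by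
  rcases Nat.even_or_odd' r with ⟨r', hr | hr⟩
  swap
  · exact odd_class_mvz k r ⟨r', hr⟩
  rcases k with _ | k
  · simpa [Nat.mod_one] using odd_class_mvz 0 1 odd_one
  have key : MVZ (fun m => (-1 : ℂ) * (if m % 2^k = r' % 2^k ∧ m % 2 = 1 then (ArithmeticFunction.moebius m : ℂ) else 0)) := by
    refine MVZ.const_mul _ ?_
    rcases k with _ | k
    · convert odd_class_mvz 1 1 odd_one using 3
      simp [Nat.mod_one]
    · have hm : ∀ m : ℕ, m % 2^(k+1) % 2 = m % 2 := fun m => Nat.mod_mod_of_dvd m ⟨2^k, by ring⟩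
      rcases Nat.even_or_odd r' with h | h
      · have : ∀ m, ¬ (m % 2^(k+1) = r' % 2^(k+1) ∧ m % 2 = 1) := by
          rintro m ⟨h1, h2⟩
          have h3 := congrArg (· % 2) h1
          simp only [hm] at h3
          rw [Nat.even_iff.mp h] at h3
          omega
        simp only [this, if_false]
        simp [MVZ]
      · convert odd_class_mvz (k+1) r' h using 3 with m
        refine ⟨fun h => h.1, fun h1 => ⟨h1, ?_⟩⟩
        have h3 := congrArg (· % 2) h1
        simp only [hm] at h3
        rw [h3]; exact Nat.odd_iff.mp h
  refine key.half (fun m => ?_) (fun m => ?_)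
  · have : 2 * m % 2^(k+1) = r % 2^(k+1) ↔ m % 2^k = r' % 2^k := by
      rw [hr, pow_succ', Nat.mul_mod_mul_left, Nat.mul_mod_mul_left]
      constructor <;> intro h <;> omega
    simp only [this, moebius_two_mul]
    split_ifs <;> simp_all
  · have hm : ∀ m : ℕ, m % 2^(k+1) % 2 = m % 2 := fun m => Nat.mod_mod_of_dvd m ⟨2^k, by ring⟩
    have : ¬ ((2 * m + 1) % 2^(k+1) = r % 2^(k+1)) := by
      intro h1
      have h3 := congrArg (· % 2) h1
      simp only [hm] at h3
      omega
    rw [if_neg this]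

theorem periodic_mvz (k : ℕ) (c : ℕ → ℂ) (hc : ∀ n, c n = c (n % 2^k)) :
    MVZ (fun n => c n * (ArithmeticFunction.moebius n : ℂ)) := by
  have h := MVZ.sum (Finset.range (2^k)) (fun r n => c r * (if n % 2^k = r % 2^k then (ArithmeticFunction.moebius n : ℂ) else 0))
    (fun r _ => (class_mvz k r).const_mul _)
  convert h using 2 with n
  have hlt : n % 2^k < 2^k := Nat.mod_lt _ (by positivity)
  rw [Finset.sum_eq_single (n % 2^k)]
  · rw [if_pos (by simp), ← hc]
  · intro r hr hne
    rw [if_neg, mul_zero]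
    rw [Nat.mod_eq_of_lt (Finset.mem_range.mp hr)]
    exact fun h => hne h.symm
  · intro h; exact absurd (Finset.mem_range.mpr hlt) h

theorem approx_mvz (a : ℕ → ℂ)
    (h : ∀ ε : ℝ, 0 < ε → ∃ (k : ℕ) (c : ℕ → ℂ), (∀ n, c n = c (n % 2^k)) ∧
      ∀ᶠ N : ℕ in atTop, ∑ n ∈ Finset.Icc 1 N, ‖a n - c n‖ ≤ ε * N) :
    MVZ (fun n => a n * (ArithmeticFunction.moebius n : ℂ)) := by
  unfold MVZ
  rw [Metric.tendsto_atTop']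
  intro ε hε
  obtain ⟨k, c, hc, hev⟩ := h (ε / 3) (by positivity)
  have hp := Metric.tendsto_atTop.mp (periodic_mvz k c hc) (ε / 3) (by positivity)
  obtain ⟨N1, hN1⟩ := hp
  obtain ⟨N2, hN2⟩ := eventually_atTop.mp hev
  refine ⟨max N1 N2 + 1, fun N hN => ?_⟩
  have h1 := hN1 N (by have := le_max_left N1 N2; omega)
  have h2 := hN2 N (by have := le_max_right N1 N2; omega)
  have hN0 : (0:ℝ) < N := by exact_mod_cast (by omega : 0 < N)
  rw [dist_zero_right, norm_div, Complex.norm_natCast, div_lt_iff₀ hN0] at *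
  have e : ∑ n ∈ Finset.Icc 1 N, a n * (ArithmeticFunction.moebius n : ℂ) =
      ∑ n ∈ Finset.Icc 1 N, c n * (ArithmeticFunction.moebius n : ℂ) +
      ∑ n ∈ Finset.Icc 1 N, (a n - c n) * (ArithmeticFunction.moebius n : ℂ) := by
    rw [← Finset.sum_add_distrib]
    exact Finset.sum_congr rfl fun n _ => by ring
  have h3 : ‖∑ n ∈ Finset.Icc 1 N, (a n - c n) * (ArithmeticFunction.moebius n : ℂ)‖ ≤ ∑ n ∈ Finset.Icc 1 N, ‖a n - c n‖ := by
    refine norm_sum_le_of_le _ fun n _ => ?_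
    rw [norm_mul]
    exact mul_le_of_le_one_right (norm_nonneg _) (norm_moebius_le n)
  rw [e]
  have h4 := norm_add_le (∑ n ∈ Finset.Icc 1 N, c n * (ArithmeticFunction.moebius n : ℂ))
      (∑ n ∈ Finset.Icc 1 N, (a n - c n) * (ArithmeticFunction.moebius n : ℂ))
  have : 0 < ε * N := by positivity
  linarith

/-- No horseshoe for any iterate. -/
def NoHS {X : Type*} [TopologicalSpace X] (f : X → X) : Prop :=
  ∀ N : ℕ, 1 ≤ N → ∀ J K : Set X, IsCompact J → IsCompact K → Disjoint J K → J.Nonempty → K.Nonempty →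
    J ∪ K ⊆ f^[N] '' J → J ∪ K ⊆ f^[N] '' K → False

theorem S1 {X : Type*} [CompleteLinearOrder X] [DenselyOrdered X] [TopologicalSpace X]
    [OrderTopology X] (f : X → X) (hf : Continuous f) (hP : NoHS f) (a c : X) (ha : f a < a)
    (hac : a < c) (hc : f c = c) : ∀ k, f^[k] a < c := by
  obtain ⟨c0, hac0, hc0, hc0c, hmin⟩ : ∃ c0, a < c0 ∧ f c0 = c0 ∧ c0 ≤ c ∧ ∀ y, a ≤ y → y < c0 → f y < y := by
    have hcl : IsClosed {y | a ≤ y ∧ f y = y} := isClosed_Ici.inter (isClosed_eq hf continuous_id)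
    have hne : ({y | a ≤ y ∧ f y = y} : Set X).Nonempty := ⟨c, hac.le, hc⟩
    have hmem := hcl.csInf_mem hne (OrderBot.bddBelow _)
    refine ⟨sInf {y | a ≤ y ∧ f y = y}, lt_of_le_of_ne hmem.1 ?_, hmem.2, csInf_le (OrderBot.bddBelow _) ⟨hac.le, hc⟩, ?_⟩
    · intro h
      have := hmem.2
      rw [← h] at this
      exact ha.ne this
    · intro y hay hy
      by_contra hcon
      push Not at hcon
      obtain ⟨w, hw, hfw⟩ := exists_mem_uIcc_isFixedPt (a := y) (b := a) hf.continuousOn hcon ha.le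
      rw [Set.uIcc_of_ge hay] at hw
      have : sInf {y | a ≤ y ∧ f y = y} ≤ w := csInf_le (OrderBot.bddBelow _) ⟨hw.1, hfw⟩
      exact absurd (this.trans hw.2) (not_le.mpr hy)
  intro k
  refine lt_of_lt_of_le ?_ hc0c
  clear hc0c hac hc c
  by_contra hk
  push Not at hk
  have hex : ∃ k, c0 ≤ f^[k] a := ⟨k, hk⟩
  classical
  obtain ⟨m, hm, hmm⟩ : ∃ m, c0 ≤ f^[m] a ∧ ∀ i < m, f^[i] a < c0 :=
    ⟨Nat.find hex, Nat.find_spec hex, fun i hi => not_le.mp (Nat.find_min hex hi)⟩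
  obtain ⟨j, rfl⟩ : ∃ j, m = j + 1 := by
    cases m with
    | zero => exact absurd hm (not_le.mpr hac0)
    | succ j => exact ⟨j, rfl⟩
  set w := f^[j] a with hw
  have hfw : c0 ≤ f w := by rw [hw, ← Function.iterate_succ_apply' f]; exact hm
  have hwc : w < c0 := hmm j (by omega)
  have hwa : w < a := by
    by_contra h
    push Not at h
    exact absurd hfw (not_le.mpr ((hmin w h hwc).trans hwc))
  obtain ⟨p, hp, hfp⟩ : a ∈ f '' Set.Icc w a :=
    intermediate_value_Icc' hwa.le hf.continuousOn ⟨ha.le, hac0.le.trans hfw⟩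
  have hpa : p < a := lt_of_le_of_ne hp.2 (by rintro rfl; exact ha.ne hfp)
  have hKJ : Set.Icc a c0 ⊆ f '' Set.Icc w p := by
    refine subset_trans ?_ (intermediate_value_Icc' hp.1 hf.continuousOn)
    rw [hfp]
    exact Set.Icc_subset_Icc le_rfl hfw
  have hKK : Set.Icc a c0 ⊆ f '' Set.Icc a c0 := by
    refine subset_trans ?_ (intermediate_value_Icc hac0.le hf.continuousOn)
    rw [hc0]
    exact Set.Icc_subset_Icc ha.le le_rfl
  have hjK : Set.Icc w c0 ⊆ f^[j] '' Set.Icc a c0 := by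
    have h := intermediate_value_Icc hac0.le (hf.iterate j).continuousOn
    have e : f^[j] c0 = c0 := Function.iterate_fixed hc0 j
    rwa [e] at h
  have hun : Set.Icc w p ∪ Set.Icc a c0 ⊆ Set.Icc w c0 := by
    apply Set.union_subset
    · exact Set.Icc_subset_Icc le_rfl (hp.2.trans hac0.le)
    · exact Set.Icc_subset_Icc hwa.le le_rfl
  refine hP (j+1) (by omega) (Set.Icc w p) (Set.Icc a c0) isCompact_Icc isCompact_Icc ?_
    ⟨w, le_rfl, hp.1⟩ ⟨a, le_rfl, hac0.le⟩ ?_ ?_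
  · rw [Set.disjoint_left]
    intro y hy1 hy2
    exact absurd (hy2.1.trans hy1.2) (not_le.mpr hpa)
  · rw [Function.iterate_succ, Set.image_comp]
    exact hun.trans (hjK.trans (Set.image_mono hKJ))
  · rw [Function.iterate_succ, Set.image_comp]
    exact hun.trans (hjK.trans (Set.image_mono hKK))

theorem S1' {X : Type*} [CompleteLinearOrder X] [DenselyOrdered X] [TopologicalSpace X]
    [OrderTopology X] (f : X → X) (hf : Continuous f) (hP : NoHS f) (a c : X) (ha : a < f a)
    (hac : c < a) (hc : f c = c) : ∀ k, c < f^[k] a :=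
  @S1 Xᵒᵈ _ _ _ _ f hf hP a c ha hac hc

/-- Standing situation. -/
structure Alt {X : Type*} [CompleteLinearOrder X] [TopologicalSpace X] (f : X → X) (x : ℕ → X) (z : X) : Prop where
  cont : Continuous f
  nohs : NoHS f
  step : ∀ n, x (n+1) = f (x n)
  fix : f z = z
  up : ∀ n, x n < z → x n < x (n+1)
  down : ∀ n, z < x n → x (n+1) < x n
  ne : ∀ n, x n ≠ z

theorem orbit_iter {X : Type*} {f : X → X} {x : ℕ → X} (h : ∀ n, x (n+1) = f (x n)) (n k : ℕ) : x (n + k) = f^[k] (x n) := by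
  induction k with
  | zero => rfl
  | succ k ih => rw [← add_assoc, h, ih, ← Function.iterate_succ_apply' f]

set_option linter.unusedSectionVars false

section
variable {X : Type*} [CompleteLinearOrder X] [DenselyOrdered X] [TopologicalSpace X] [OrderTopology X]
  {f : X → X} {x : ℕ → X} {z : X}

theorem Alt.dual (h : Alt f x z) : @Alt Xᵒᵈ _ _ f x z :=
  ⟨h.cont, h.nohs, h.step, h.fix, h.down, h.up, h.ne⟩

theorem Alt.cover0 (h : Alt f x z) (i k : ℕ) : Set.uIcc (x (i + k)) z ⊆ f^[k] '' Set.uIcc (x i) z := by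
  have := intermediate_value_uIcc (a := x i) (b := z) (h.cont.iterate k).continuousOn
  rwa [Function.iterate_fixed h.fix k, ← orbit_iter h.step] at this

theorem Alt.nest (h : Alt f x z) (b : ℕ) (hb : x b < z ↔ x (b+1) < z) :
    Set.uIcc (x (b+1)) z ⊆ Set.uIcc (x b) z := by
  rcases lt_or_gt_of_ne (h.ne b) with h1 | h1
  · rw [Set.uIcc_of_le h1.le, Set.uIcc_of_le (hb.mp h1).le]
    exact Set.Icc_subset_Icc (h.up b h1).le le_rfl
  · have h2 : z < x (b+1) := lt_of_le_of_ne (not_lt.mp fun h2 => absurd (hb.mpr h2) h1.not_gt) (h.ne _).symm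
    rw [Set.uIcc_of_ge h1.le, Set.uIcc_of_ge h2.le]
    exact Set.Icc_subset_Icc le_rfl (h.down b h1).le

theorem Alt.cover (h : Alt f x z) (hf : ∃ᶠ b in atTop, (x b < z ↔ x (b+1) < z)) (s i : ℕ) :
    ∃ K0, ∀ k ≥ K0, Set.uIcc (x (i + k + s)) z ⊆ f^[k] '' Set.uIcc (x i) z := by
  induction s with
  | zero => exact ⟨0, fun k _ => h.cover0 i k⟩
  | succ s ih =>
    obtain ⟨K0, hK0⟩ := ih
    obtain ⟨b, hb, hbs⟩ := (frequently_atTop.mp hf) (i + K0 + s)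
    refine ⟨b - i - s, fun k hk => ?_⟩
    have h1 := hK0 (b - i - s) (by omega)
    rw [show i + (b - i - s) + s = b by omega] at h1
    have h2 := (h.nest b hbs).trans h1
    have h3 := h.cover0 (b+1) (k - (b - i - s))
    rw [show b + 1 + (k - (b - i - s)) = i + k + (s+1) by omega] at h3
    refine h3.trans ((Set.image_mono h2).trans ?_)
    rw [← Set.image_comp, ← Function.iterate_add]
    rw [show k - (b - i - s) + (b - i - s) = k by omega]

theorem Alt.H (h : Alt f x z) (hf : ∃ᶠ b in atTop, (x b < z ↔ x (b+1) < z)) (g k τ : ℕ)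
    (hgk : x g < x k) (hk : x k < z) (hτ : ¬ (x (g + τ) < z ↔ x (k + τ) < z))
    (hfr : ∃ᶠ n in atTop, x n ≤ x g) : False := by
  obtain ⟨y, hy, hyz⟩ : z ∈ f^[τ] '' Set.uIcc (x g) (x k) := by
    refine intermediate_value_uIcc (h.cont.iterate τ).continuousOn ?_
    rw [← orbit_iter h.step, ← orbit_iter h.step, Set.mem_uIcc]
    rcases lt_or_gt_of_ne (h.ne (g+τ)) with h1 | h1 <;> rcases lt_or_gt_of_ne (h.ne (k+τ)) with h2 | h2
    · simp [h1, h2] at hτ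
    · exact Or.inl ⟨h1.le, h2.le⟩
    · exact Or.inr ⟨h2.le, h1.le⟩
    · simp [h1.not_gt, h2.not_gt] at hτ
  rw [Set.uIcc_of_le hgk.le] at hy
  have hyk : y < x k := lt_of_le_of_ne hy.2 (by
    rintro rfl
    rw [← orbit_iter h.step] at hyz
    exact h.ne _ hyz)
  have hJ : Set.uIcc (x (g+τ)) z ⊆ f^[τ] '' Set.Icc (x g) y := by
    have := intermediate_value_uIcc (a := x g) (b := y) (h.cont.iterate τ).continuousOn
    rwa [hyz, ← orbit_iter h.step, Set.uIcc_of_le hy.1] at this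
  obtain ⟨K0, hK0⟩ := h.cover hf k (g+τ)
  obtain ⟨K1, hK1⟩ := h.cover hf g k
  obtain ⟨n, hn, hxn⟩ := (frequently_atTop.mp hfr) (g + k + K1 + τ + K0 + 1)
  have hgz := hgk.trans hk
  have hLn : Set.Icc (x g) z ⊆ Set.uIcc (x n) z := by
    rw [Set.uIcc_of_le (hxn.trans hgz.le)]
    exact Set.Icc_subset_Icc hxn le_rfl
  have hun : Set.Icc (x g) y ∪ Set.Icc (x k) z ⊆ Set.uIcc (x n) z := by
    refine (Set.union_subset ?_ ?_).trans hLn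
    · exact Set.Icc_subset_Icc le_rfl (hyk.le.trans hk.le)
    · exact Set.Icc_subset_Icc hgk.le le_rfl
  refine h.nohs (n - g - k) (by omega) (Set.Icc (x g) y) (Set.Icc (x k) z) isCompact_Icc isCompact_Icc ?_
    ⟨x g, le_rfl, hy.1⟩ ⟨x k, le_rfl, hk.le⟩ ?_ ?_
  · rw [Set.disjoint_left]
    intro w hw1 hw2
    exact absurd (hw2.1.trans hw1.2) (not_le.mpr hyk)
  · have h1 := hK0 (n - g - k - τ) (by omega)
    rw [show g + τ + (n - g - k - τ) + k = n by omega] at h1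
    refine hun.trans (h1.trans ((Set.image_mono hJ).trans ?_))
    rw [← Set.image_comp, ← Function.iterate_add]
    rw [show n - g - k - τ + τ = n - g - k by omega]
  · have h1 := hK1 (n - g - k) (by omega)
    rw [show k + (n - g - k) + g = n by omega, Set.uIcc_of_le hk.le] at h1
    exact hun.trans h1

theorem Alt.same (h : Alt f x z) (hf : ∃ᶠ b in atTop, (x b < z ↔ x (b+1) < z)) (g k : ℕ)
    (hg : x g < z) (hk : x k < z) (hqg : ∃ᶠ n in atTop, x n ≤ x g) (hqk : ∃ᶠ n in atTop, x n ≤ x k) (τ : ℕ) :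
    x (g + τ) < z ↔ x (k + τ) < z := by
  rcases lt_trichotomy (x g) (x k) with h1 | h1 | h1
  · by_contra hcon
    exact h.H hf g k τ h1 hk hcon hqg
  · rw [orbit_iter h.step, orbit_iter h.step, h1]
  · by_contra hcon
    exact h.H hf k g τ h1 hg (fun h => hcon h.symm) hqk

theorem Alt.caseA (h : Alt f x z) (hf : ∃ᶠ b in atTop, (x b < z ↔ x (b+1) < z)) (p : ℕ)
    (hp : x p < z) (hp1 : x (p+1) < z) (hq : ∃ᶠ n in atTop, x n ≤ x p) : False := by
  have hs := h.same hf p (p+1) hp hp1 hq (hq.mono fun n hn => hn.trans (h.up p hp).le)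
  have hall : ∀ i, x (p + i) < z ∧ x p ≤ x (p + i) := by
    intro i
    induction i with
    | zero => exact ⟨hp, le_rfl⟩
    | succ i ih =>
      have := (hs i).mp ih.1
      rw [show p + 1 + i = p + (i+1) by ring] at this
      exact ⟨this, ih.2.trans (h.up _ ih.1).le⟩
  obtain ⟨n, hn, hxn⟩ := (frequently_atTop.mp hq) (p+2)
  have h1 := hall (n - (p+1))
  have h2 := h.up _ (hall (n - (p+1))).1
  rw [show p + (n - (p+1)) + 1 = n by omega] at h2
  exact absurd (h1.2.trans_lt h2) (not_lt.mpr hxn)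

theorem conv_of_res {Y : Type*} [TopologicalSpace Y] (x : ℕ → Y) (l : Y) (p t : ℕ) (ht : 0 < t)
    (h : ∀ r, r < t → Tendsto (fun k => x (p + k * t + r)) atTop (𝓝 l)) : Tendsto x atTop (𝓝 l) := by
  rw [tendsto_def]
  intro U hU
  have h1 : ∀ᶠ k in atTop, ∀ r ∈ Finset.range t, x (p + k * t + r) ∈ U := by
    rw [Filter.eventually_all_finset]
    intro r hr
    exact (h r (Finset.mem_range.mp hr)).eventually_mem hU
  obtain ⟨k0, hk0⟩ := eventually_atTop.mp h1
  filter_upwards [eventually_ge_atTop (p + k0 * t)] with n hn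
  have h2 := hk0 ((n - p) / t) ((Nat.le_div_iff_mul_le ht).mpr (by omega)) ((n - p) % t) (Finset.mem_range.mpr (Nat.mod_lt _ ht))
  have h3 := Nat.div_add_mod' (n - p) t
  rw [show p + (n - p) / t * t + (n - p) % t = n by omega] at h2
  exact h2

end

section
variable {X : Type*} [CompleteLinearOrder X] [DenselyOrdered X] [TopologicalSpace X] [OrderTopology X]
  {f : X → X} {x : ℕ → X} {z : X}

/-- Case B(i). -/
theorem Alt.caseB1 (h : Alt f x z)
    (hconv : ¬ ∃ l, Tendsto x atTop (𝓝 l)) (α : X) (t p : ℕ) (ht : 0 < t)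
    (hp : x p < z) (hp1 : x (p+1) < z)
    (hper : ∀ n, p ≤ n → (x n < z ↔ x (n + t) < z))
    (hlim : Tendsto (fun k => x (p + k * t)) atTop (𝓝 α)) : False := by
  have hr : ∀ r, Tendsto (fun k => x (p + k * t + r)) atTop (𝓝 (f^[r] α)) := by
    intro r
    have := ((h.cont.iterate r).tendsto α).comp hlim
    refine this.congr fun k => ?_
    simp only [Function.comp_apply]
    rw [← orbit_iter h.step]
  have hperα : f^[t] α = α := by
    refine tendsto_nhds_unique (hr t) ?_
    have := hlim.comp (tendsto_add_atTop_nat 1)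
    refine this.congr fun k => ?_
    simp only [Function.comp_apply]
    congr 1; ring
  have hnfix : f α ≠ α := by
    intro hfix
    refine hconv ⟨α, conv_of_res x α p t ht fun r _ => ?_⟩
    have := hr r
    rwa [Function.iterate_fixed hfix] at this
  have hret : ∀ m, f^[m * t] α = α := by
    intro m
    rw [mul_comm, Function.iterate_mul]
    exact Function.iterate_fixed hperα m
  have hynf : ∀ r, f (f^[r] α) ≠ f^[r] α := by
    intro r hfx
    have h1 : ∀ i, f^[r + i] α = f^[r] α := by
      intro i
      rw [add_comm, Function.iterate_add_apply]
      exact Function.iterate_fixed hfx i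
    have h2 := h1 (r * t - r)
    have hle : r ≤ r * t := Nat.le_mul_of_pos_right r ht
    rw [show r + (r * t - r) = r * t by omega, hret] at h2
    rw [← h2] at hfx
    exact hnfix hfx
  have hside : ∀ r k, x (p + r) < z ↔ x (p + k * t + r) < z := by
    intro r k
    induction k with
    | zero => simp
    | succ k ih =>
      rw [ih, hper _ (by nlinarith)]
      rw [show p + k * t + r + t = p + (k+1) * t + r by ring]
  have hyne : ∀ r, f^[r] α ≠ z := by
    intro r hz
    apply hynf r
    rw [hz, h.fix]
  have hyL : ∀ r, x (p + r) < z ↔ f^[r] α < z := by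
    intro r
    constructor
    · intro hl
      refine lt_of_le_of_ne (le_of_tendsto' (hr r) fun k => ((hside r k).mp hl).le) (hyne r)
    · intro hl
      by_contra hcon
      refine absurd hl (not_lt.mpr ?_)
      refine ge_of_tendsto' (hr r) fun k => ?_
      rw [hside r k] at hcon
      exact not_lt.mp hcon
  have hA : Alt f (fun r => f^[r] α) z := by
    refine ⟨h.cont, h.nohs, fun n => Function.iterate_succ_apply' f n α, h.fix, ?_, ?_, hyne⟩
    · intro r hl
      refine lt_of_le_of_ne ?_ ?_
      · refine le_of_tendsto_of_tendsto' (hr r) (hr (r+1)) fun k => ?_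
        exact (h.up _ ((hside r k).mp ((hyL r).mpr hl))).le
      · simp only [Function.iterate_succ_apply']
        exact (hynf r).symm
    · intro r hl
      refine lt_of_le_of_ne ?_ ?_
      · refine le_of_tendsto_of_tendsto' (hr (r+1)) (hr r) fun k => ?_
        refine (h.down _ ?_).le
        refine lt_of_le_of_ne (not_lt.mp fun hc => ?_) (h.ne _).symm
        exact absurd ((hyL r).mp ((hside r k).mpr hc)) (not_lt.mpr hl.le)
      · simp only [Function.iterate_succ_apply']
        exact hynf r
  refine hA.caseA ?_ 0 ((hyL 0).mp hp) ((hyL 1).mp hp1) ?_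
  · rw [frequently_atTop]
    intro M
    refine ⟨M * t, Nat.le_mul_of_pos_right M ht, ?_⟩
    have e1 : f^[M * t + 1] α = f α := by rw [Function.iterate_succ_apply', hret]
    simp only [e1, hret]
    have a1 := (hyL 0).mp hp
    have a2 := (hyL 1).mp hp1
    simp at a1 a2
    simp [a1, a2]
  · rw [frequently_atTop]
    intro M
    refine ⟨M * t, Nat.le_mul_of_pos_right M ht, ?_⟩
    simp [hret]

theorem Alt.noLL (h : Alt f x z) (hconv : ¬ ∃ l, Tendsto x atTop (𝓝 l))
    (hLL : ∃ᶠ p in atTop, x p < z ∧ x (p+1) < z) : False := by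
  have hf : ∃ᶠ b in atTop, (x b < z ↔ x (b+1) < z) := hLL.mono fun b hb => by simp [hb]
  by_cases hA : ∃ p, x p < z ∧ x (p+1) < z ∧ ∃ᶠ n in atTop, x n ≤ x p
  · obtain ⟨p, h1, h2, h3⟩ := hA
    exact h.caseA hf p h1 h2 h3
  push Not at hA
  set α := liminf x atTop with hα
  have hle : ∀ i, (∀ᶠ n in atTop, x i < x n) → x i ≤ α := fun i hi =>
    le_liminf_of_le (by isBoundedDefault) (hi.mono fun n hn => hn.le)
  have hst : ∀ p, x p < z → x (p+1) < z → x p ≤ α := fun p h1 h2 =>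
    hle p ((hA p h1 h2).mono fun n hn => by simpa using hn)
  have hgt : ∀ b, b < α → ∀ᶠ n in atTop, b < x n := fun b hb => eventually_lt_of_lt_liminf hb
  by_cases hB : ∃ᶠ p in atTop, (x p < z ∧ x (p+1) < z) ∧ ∃ᶠ n in atTop, x n ≤ x (p+1)
  · obtain ⟨p, -, ⟨hp0, hp1⟩, hpq⟩ := (frequently_atTop.mp hB) 0
    obtain ⟨p', hpp, ⟨hp0', hp1'⟩, hpq'⟩ := (frequently_atTop.mp hB) (p+1)
    have hs := h.same hf (p+1) (p'+1) hp1 hp1' hpq hpq'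
    have hper : ∀ n, p + 1 ≤ n → (x n < z ↔ x (n + (p' - p)) < z) := by
      intro n hn
      have := hs (n - (p+1))
      rwa [show p + 1 + (n - (p+1)) = n by omega, show p' + 1 + (n - (p+1)) = n + (p' - p) by omega] at this
    have hk : ∀ k, x (p' + k * (p' - p)) < z ∧ x (p' + k * (p' - p) + 1) < z := by
      intro k
      induction k with
      | zero => simpa using ⟨hp0', hp1'⟩
      | succ k ih =>
        have a1 := (hper _ (by nlinarith)).mp ih.1
        have a2 := (hper _ (by nlinarith)).mp ih.2
        rw [show p' + k * (p' - p) + (p' - p) = p' + (k+1) * (p' - p) by ring] at a1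
        rw [show p' + k * (p' - p) + 1 + (p' - p) = p' + (k+1) * (p' - p) + 1 by ring] at a2
        exact ⟨a1, a2⟩
    have hlim : Tendsto (fun k => x (p' + k * (p' - p))) atTop (𝓝 α) := by
      rw [tendsto_order]
      constructor
      · intro b hb
        have : Tendsto (fun k => p' + k * (p' - p)) atTop atTop := by
          refine tendsto_atTop_mono (fun k => ?_) tendsto_id
          have : k * 1 ≤ k * (p' - p) := Nat.mul_le_mul_left k (by omega)
          simp only [id]; omega
        exact this.eventually (hgt b hb)
      · intro b hb
        exact Eventually.of_forall fun k => (hst _ (hk k).1 (hk k).2).trans_lt hb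
    exact h.caseB1 hconv α (p' - p) p' (by omega) hp0' hp1' (fun n hn => hper n (by omega)) hlim
  · rw [not_frequently] at hB
    have hst1 : ∃ᶠ p in atTop, x p < z ∧ x p < x (p+1) ∧ x (p+1) ≤ α := by
      refine (hLL.and_eventually hB).mono ?_
      rintro p ⟨⟨h1, h2⟩, h3⟩
      refine ⟨h1, h.up p h1, hle _ ?_⟩
      have : ¬ ∃ᶠ n in atTop, x n ≤ x (p+1) := fun hc => h3 ⟨⟨h1, h2⟩, hc⟩
      rw [not_frequently] at this
      exact this.mono fun n hn => not_le.mp hn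
    have hfix : f α = α := by
      set S := {p | x p < z ∧ x p < x (p+1) ∧ x (p+1) ≤ α}
      have hne : (atTop ⊓ 𝓟 S : Filter ℕ).NeBot := frequently_mem_iff_neBot.mp hst1
      have t1 : Tendsto x (atTop ⊓ 𝓟 S) (𝓝 α) := by
        rw [tendsto_order]
        constructor
        · intro b hb
          exact (hgt b hb).filter_mono inf_le_left
        · intro b hb
          filter_upwards [mem_inf_of_right (mem_principal_self S)] with p hp
          exact (hp.2.1.trans_le hp.2.2).trans hb
      have t2 : Tendsto (fun p => x (p+1)) (atTop ⊓ 𝓟 S) (𝓝 α) := by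
        rw [tendsto_order]
        constructor
        · intro b hb
          filter_upwards [(hgt b hb).filter_mono inf_le_left, mem_inf_of_right (mem_principal_self S)] with p hp1 hp
          exact hp1.trans hp.2.1
        · intro b hb
          filter_upwards [mem_inf_of_right (mem_principal_self S)] with p hp
          exact hp.2.2.trans_lt hb
      have t3 := (h.cont.tendsto α).comp t1
      refine tendsto_nhds_unique t3 (t2.congr fun p => ?_)
      simp [h.step]
    have hleft : ∀ n, x n < z → x n < α := by
      intro n hn
      by_contra hcon
      push Not at hcon
      have hup := h.up n hn
      rw [h.step] at hup
      have hne : α ≠ x n := by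
        intro he
        rw [← he, hfix] at hup
        exact hup.ne rfl
      have h1 := S1' f h.cont h.nohs (x n) α hup (lt_of_le_of_ne hcon hne) hfix
      obtain ⟨p, hp, hp1, hp2, hp3⟩ := (frequently_atTop.mp hst1) n
      have h2 := h1 (p - n)
      rw [← orbit_iter h.step, show n + (p - n) = p by omega] at h2
      exact absurd (hp2.trans_le hp3) (not_lt.mpr h2.le)
    refine hconv ⟨α, ?_⟩
    rw [tendsto_order]
    refine ⟨hgt, fun b hb => ?_⟩
    obtain ⟨p0, -, hp01, hp02, hp03⟩ := (frequently_atTop.mp hst1) 0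
    have hnb : f ⁻¹' (Set.Iio b) ∈ 𝓝 α := h.cont.continuousAt.preimage_mem_nhds (by
      rw [hfix]; exact Iio_mem_nhds hb)
    obtain ⟨a, ha, hab⟩ := exists_Ioc_subset_of_mem_nhds hnb ⟨x p0, hp02.trans_le hp03⟩
    obtain ⟨M, hM⟩ := eventually_atTop.mp (hgt a ha)
    obtain ⟨n0, hn0, hn1, hn2, hn3⟩ := (frequently_atTop.mp hst1) M
    filter_upwards [eventually_ge_atTop n0] with n hn
    induction n, hn using Nat.le_induction with
    | base => exact (hn2.trans_le hn3).trans hb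
    | succ n hn ih =>
      rcases lt_or_gt_of_ne (h.ne n) with h1 | h1
      · rw [h.step]
        exact hab ⟨hM n (by omega), (hleft n h1).le⟩
      · exact (h.down n h1).trans ih

theorem alt_main (f : X → X) (hcf : Continuous f) (hP : NoHS f) (x : ℕ → X)
    (hx : ∀ n, x (n+1) = f (x n)) (hconv : ¬ ∃ l, Tendsto x atTop (𝓝 l)) :
    ∃ (z : X) (M : ℕ), ∀ n ≥ M, x n ≠ z ∧ (x n < z ↔ z < x (n+1)) := by
  have hnf : ∀ n, f (x n) ≠ x n := by
    intro n hn
    refine hconv ⟨x n, ?_⟩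
    refine tendsto_const_nhds.congr' ?_
    filter_upwards [eventually_ge_atTop n] with m hm
    have := orbit_iter hx n (m - n)
    rw [Function.iterate_fixed hn, show n + (m - n) = m by omega] at this
    exact this.symm
  have hU : ∃ n, x n < f (x n) := by
    by_contra hcon
    push Not at hcon
    have : Antitone x := antitone_nat_of_succ_le fun n => by rw [hx]; exact hcon n
    exact hconv ⟨_, tendsto_atTop_iInf this⟩
  have hD : ∃ n, f (x n) < x n := by
    by_contra hcon
    push Not at hcon
    have : Monotone x := monotone_nat_of_le_succ fun n => by rw [hx]; exact hcon n
    exact hconv ⟨_, tendsto_atTop_iSup this⟩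
  have hUD : ∀ m n, x m < f (x m) → f (x n) < x n → x m < x n := by
    intro m n hm hn
    by_contra hcon
    push Not at hcon
    have hlt : x n < x m := lt_of_le_of_ne hcon (by
      intro he
      rw [he] at hn
      exact absurd hn (not_lt.mpr hm.le))
    obtain ⟨c, hc, hfc⟩ := exists_mem_uIcc_isFixedPt (a := x m) (b := x n) hcf.continuousOn hm.le hn.le
    rw [Set.uIcc_of_ge hcon] at hc
    have hfc' : f c = c := hfc
    have hc1 : x n < c := lt_of_le_of_ne hc.1 (by rintro rfl; exact hn.ne hfc')
    have hc2 : c < x m := lt_of_le_of_ne hc.2 (by rintro rfl; exact hm.ne hfc'.symm)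
    rcases le_total n m with hnm | hnm
    · have := S1 f hcf hP (x n) c hn hc1 hfc' (m - n)
      rw [← orbit_iter hx, show n + (m - n) = m by omega] at this
      exact absurd this hc2.not_gt
    · have := S1' f hcf hP (x m) c hm hc2 hfc' (n - m)
      rw [← orbit_iter hx, show m + (n - m) = n by omega] at this
      exact absurd this hc1.not_gt
  obtain ⟨z, hz, hzU, hzD⟩ : ∃ z, f z = z ∧ (∀ n, x n < f (x n) → x n ≤ z) ∧ (∀ n, f (x n) < x n → z ≤ x n) := by
    set U := {y | ∃ n, x n = y ∧ x n < f (x n)} with hUdef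
    set D := {y | ∃ n, x n = y ∧ f (x n) < x n} with hDdef
    have hUne : U.Nonempty := by obtain ⟨n, hn⟩ := hU; exact ⟨x n, n, rfl, hn⟩
    have hDne : D.Nonempty := by obtain ⟨n, hn⟩ := hD; exact ⟨x n, n, rfl, hn⟩
    have h1 : sSup U ≤ f (sSup U) := by
      have hcl : IsClosed {y | y ≤ f y} := isClosed_le continuous_id hcf
      have hsub : U ⊆ {y | y ≤ f y} := by rintro y ⟨n, rfl, hn⟩; exact hn.le
      exact closure_minimal hsub hcl (csSup_mem_closure hUne (OrderTop.bddAbove _))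
    have h2 : f (sInf D) ≤ sInf D := by
      have hcl : IsClosed {y | f y ≤ y} := isClosed_le hcf continuous_id
      have hsub : D ⊆ {y | f y ≤ y} := by rintro y ⟨n, rfl, hn⟩; exact hn.le
      exact closure_minimal hsub hcl (csInf_mem_closure hDne (OrderBot.bddBelow _))
    have h3 : sSup U ≤ sInf D := by
      refine sSup_le ?_
      rintro _ ⟨m, rfl, hm⟩
      refine le_sInf ?_
      rintro _ ⟨n, rfl, hn⟩
      exact (hUD m n hm hn).le
    obtain ⟨z, hz, hfz⟩ := exists_mem_Icc_isFixedPt hcf.continuousOn h3 h1 h2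
    exact ⟨z, hfz, fun n hn => (le_sSup (show x n ∈ U from ⟨n, rfl, hn⟩)).trans hz.1, fun n hn => hz.2.trans (sInf_le (show x n ∈ D from ⟨n, rfl, hn⟩))⟩
  have hne : ∀ n, x n ≠ z := fun n hn => hnf n (by rw [hn, hz])
  have hA : Alt f x z := by
    refine ⟨hcf, hP, hx, hz, ?_, ?_, hne⟩
    · intro n hn
      rw [hx]
      refine lt_of_le_of_ne (not_lt.mp fun hc => ?_) (hnf n).symm
      exact absurd (hzD n hc) (not_le.mpr hn)
    · intro n hn
      rw [hx]
      refine lt_of_le_of_ne (not_lt.mp fun hc => ?_) (hnf n)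
      exact absurd (hzU n hc) (not_le.mpr hn)
  have hLL : ¬ ∃ᶠ p in atTop, x p < z ∧ x (p+1) < z := fun hc => hA.noLL hconv hc
  have hRR : ¬ ∃ᶠ p in atTop, z < x p ∧ z < x (p+1) := fun hc => hA.dual.noLL hconv hc
  rw [not_frequently] at hLL hRR
  obtain ⟨M, hM⟩ := eventually_atTop.mp (hLL.and hRR)
  refine ⟨z, M, fun n hn => ⟨hne n, ?_⟩⟩
  obtain ⟨h1, h2⟩ := hM n hn
  rcases lt_or_gt_of_ne (hne n) with a | a <;> rcases lt_or_gt_of_ne (hne (n+1)) with b | b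
  · exact absurd ⟨a, b⟩ h1
  · simp [a, b]
  · simp [a.not_gt, b.not_gt]
  · exact absurd ⟨a, b⟩ h2

end

theorem NoHS.iter {X : Type*} [TopologicalSpace X] {f : X → X} (h : NoHS f) (m : ℕ) (hm : 1 ≤ m) :
    NoHS (f^[m]) := by
  intro N hN J K hJ hK hd hJn hKn h1 h2
  rw [← Function.iterate_mul] at h1 h2
  exact h (m * N) (Nat.mul_pos hm hN) J K hJ hK hd hJn hKn h1 h2

theorem itin {X : Type*} (F : X → X) (S : Bool → Set X) (hne : ∀ b, (S b).Nonempty)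
    (hS : ∀ b b', S b' ⊆ F '' S b) (n : ℕ) : ∀ w : ℕ → Bool, ∃ p, ∀ i ≤ n, F^[i] p ∈ S (w i) := by
  induction n with
  | zero =>
    intro w
    obtain ⟨p, hp⟩ := hne (w 0)
    refine ⟨p, fun i hi => ?_⟩
    obtain rfl : i = 0 := by omega
    exact hp
  | succ n ih =>
    intro w
    obtain ⟨p', hp'⟩ := ih (fun i => w (i+1))
    obtain ⟨p, hp, hpp⟩ := hS (w 0) (w 1) (hp' 0 (by omega))
    refine ⟨p, fun i hi => ?_⟩
    cases i with
    | zero => exact hp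
    | succ i =>
      rw [Function.iterate_succ_apply, hpp]
      exact hp' i (by omega)

theorem noHS_of_entropy {X : Type*} [UniformSpace X] [T2Space X] (f : X → X)
    (h : Dynamics.coverEntropy f Set.univ = 0) : NoHS f := by
  classical
  intro N hN J K hJ hK hd hJn hKn h1 h2
  obtain ⟨V, hV, hVd⟩ := hd.exists_uniform_thickening hJ hK.isClosed
  have hle := Dynamics.netEntropyEntourage_le_coverEntropy f Set.univ hV
  rw [h] at hle
  set c : ℝ := Real.log 2 / (2 * N) with hc
  have hN0 : (0:ℝ) < N := by exact_mod_cast hN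
  have hl2 : 0 < Real.log 2 := Real.log_pos (by norm_num)
  have hcpos : 0 < c := by positivity
  have hlt : Dynamics.netEntropyEntourage f Set.univ V < ((c : ℝ) : EReal) :=
    hle.trans_lt (by exact_mod_cast hcpos)
  have hev := ExpGrowth.eventually_le_exp hlt
  obtain ⟨m0, hm0⟩ := eventually_atTop.mp hev
  set n := m0 + 1 with hn
  have hb := hm0 (N * n) (by nlinarith)
  set S : Bool → Set X := fun b => if b then J else K with hS
  have hSne : ∀ b, (S b).Nonempty := by intro b; cases b <;> simp [hS, hJn, hKn]
  have hSS : ∀ b b', S b' ⊆ f^[N] '' S b := by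
    intro b b'
    cases b <;> cases b' <;> simp only [hS, if_true, Bool.false_eq_true, if_false]
    · exact Set.subset_union_right.trans h2
    · exact Set.subset_union_left.trans h2
    · exact Set.subset_union_right.trans h1
    · exact Set.subset_union_left.trans h1
  have hpt : ∀ w : Fin n → Bool, ∃ p, ∀ i : Fin n, f^[N * i] p ∈ S (w i) := by
    intro w
    obtain ⟨p, hp⟩ := itin (f^[N]) S hSne hSS n (fun i => if hi : i < n then w ⟨i, hi⟩ else true)
    refine ⟨p, fun i => ?_⟩
    have := hp i i.2.le
    rw [← Function.iterate_mul] at this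
    simpa using this
  choose pt hpt using hpt
  have hsep : ∀ w w', w ≠ w' → Disjoint (UniformSpace.ball (pt w) (Dynamics.dynEntourage f V (N * n)))
      (UniformSpace.ball (pt w') (Dynamics.dynEntourage f V (N * n))) := by
    intro w w' hww
    rw [Set.disjoint_left]
    intro y hy hy'
    obtain ⟨i, hi⟩ := Function.ne_iff.mp hww
    rw [Dynamics.mem_ball_dynEntourage] at hy hy'
    have hlt : N * (i : ℕ) < N * n := Nat.mul_lt_mul_of_pos_left i.2 hN
    have a1 := hy _ hlt
    have a2 := hy' _ hlt
    have b1 := hpt w i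
    have b2 := hpt w' i
    have key : ∀ u v, u ∈ J → v ∈ K → f^[N * i] y ∈ UniformSpace.ball u V → f^[N*i] y ∈ UniformSpace.ball v V → False := by
      intro u v hu hv q1 q2
      refine Set.disjoint_left.mp hVd (Set.mem_biUnion hu q1) (Set.mem_biUnion hv q2)
    cases hw : w i <;> cases hw' : w' i
    · rw [hw, hw'] at hi; exact hi rfl
    · rw [hw] at b1; rw [hw'] at b2
      exact key _ _ (by simpa [hS] using b2) (by simpa [hS] using b1) a2 a1
    · rw [hw] at b1; rw [hw'] at b2
      exact key _ _ (by simpa [hS] using b1) (by simpa [hS] using b2) a1 a2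
    · rw [hw, hw'] at hi; exact hi rfl
  have hrefl : ∀ p, p ∈ UniformSpace.ball p (Dynamics.dynEntourage f V (N * n)) := by
    intro p
    rw [Dynamics.mem_ball_dynEntourage]
    intro k _
    exact UniformSpace.mem_ball_self _ hV
  have hinj : Function.Injective pt := by
    intro w w' hww
    by_contra hne
    have := hsep w w' hne
    rw [hww] at this
    exact Set.disjoint_left.mp this (hrefl _) (hrefl _)
  have hnet : Dynamics.IsDynNetIn f Set.univ V (N * n) ((Finset.univ.image pt : Finset X) : Set X) := by
    refine ⟨Set.subset_univ _, ?_⟩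
    intro p hp p' hp' hpp
    simp only [Finset.coe_image, Finset.coe_univ, Set.image_univ, Set.mem_range] at hp hp'
    obtain ⟨w, rfl⟩ := hp
    obtain ⟨w', rfl⟩ := hp'
    exact hsep w w' (fun h => hpp (by rw [h]))
  have hcard := hnet.card_le_netMaxcard
  rw [Finset.card_image_of_injective _ hinj, Finset.card_univ, Fintype.card_fun, Fintype.card_bool, Fintype.card_fin] at hcard
  have h3 : ((2 ^ n : ℕ) : ENNReal) ≤ EReal.exp ((c : EReal) * ((N * n : ℕ) : EReal)) := by
    refine le_trans ?_ hb
    have := ENat.toENNReal_mono hcard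
    simpa using this
  have h4 : (c : EReal) * ((N * n : ℕ) : EReal) = ((c * (N * n : ℕ) : ℝ) : EReal) := by
    rw [EReal.coe_mul]; rfl
  rw [h4, EReal.exp_coe] at h3
  have h5 : ((2 ^ n : ℕ) : ℝ) ≤ Real.exp (c * (N * n : ℕ)) := by
    rw [← ENNReal.ofReal_natCast] at h3
    exact (ENNReal.ofReal_le_ofReal_iff (Real.exp_pos _).le).mp h3
  have h6 : c * (N * n : ℕ) = n * Real.log 2 / 2 := by
    rw [hc]; push_cast; field_simp
  have h7 : ((2 ^ n : ℕ) : ℝ) = Real.exp (n * Real.log 2) := by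
    rw [mul_comm, Real.exp_mul, Real.exp_log (by norm_num)]; simp
  rw [h6, h7, Real.exp_le_exp] at h5
  have : 0 < (n:ℝ) * Real.log 2 := by
    have : (0:ℝ) < n := by rw [hn]; positivity
    positivity
  linarith

theorem dens_bound (u : ℕ → ℝ) (C : ℝ) (hu0 : ∀ n, u n ≤ C) (q : ℕ) (hq : 0 < q) (w : ℕ → ℝ)
    (hw : ∀ r, 0 ≤ w r) (M : ℕ) (huw : ∀ n ≥ M, u n ≤ w (n % q)) (ε : ℝ) (hε : 0 < ε)
    (hsum : ∑ r ∈ Finset.range q, w r ≤ ε * q) :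
    ∀ᶠ N : ℕ in atTop, ∑ n ∈ Finset.Icc 1 N, u n ≤ 2 * ε * N := by
  have hC : ∀ n, u n ≤ (if n < M then |C| else 0) + w (n % q) := by
    intro n
    split_ifs with h
    · have := hu0 n; have := le_abs_self C; have := hw (n % q); linarith
    · have := huw n (not_lt.mp h); linarith
  have hper : ∀ m, ∑ n ∈ Finset.range (q * m), w (n % q) = m * ∑ r ∈ Finset.range q, w r := by
    intro m
    induction m with
    | zero => simp
    | succ m ih =>
      rw [Nat.mul_succ, Finset.sum_range_add, ih]
      have : ∑ x ∈ Finset.range q, w ((q * m + x) % q) = ∑ r ∈ Finset.range q, w r := by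
        refine Finset.sum_congr rfl fun r hr => ?_
        rw [Nat.mul_add_mod, Nat.mod_eq_of_lt (Finset.mem_range.mp hr)]
      rw [this]; push_cast; ring
  have hS0 : ∀ N, ∑ n ∈ Finset.range N, (if n < M then |C| else 0) ≤ M * |C| := by
    intro N
    rw [← Finset.sum_filter, Finset.sum_const, nsmul_eq_mul]
    gcongr
    have : (Finset.range N).filter (· < M) ⊆ Finset.range M := by
      intro n hn; simp at hn ⊢; exact hn.2
    simpa using Finset.card_le_card this
  obtain ⟨N0, hN0⟩ := exists_nat_ge ((M * |C| + ε * q) / ε)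
  filter_upwards [eventually_ge_atTop N0] with N hN
  have hN' : (N0 : ℝ) ≤ N := by exact_mod_cast hN
  have hfin : M * |C| + ε * q ≤ ε * N := by
    have := hN0.trans hN'
    rw [div_le_iff₀ hε] at this
    linarith
  have hlt := Nat.lt_mul_div_succ N hq
  calc ∑ n ∈ Finset.Icc 1 N, u n ≤ ∑ n ∈ Finset.Icc 1 N, ((if n < M then |C| else 0) + w (n % q)) :=
        Finset.sum_le_sum fun n _ => hC n
    _ ≤ ∑ n ∈ Finset.range (q * (N / q + 1)), ((if n < M then |C| else 0) + w (n % q)) := by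
        refine Finset.sum_le_sum_of_subset_of_nonneg ?_ ?_
        · intro n hn
          simp only [Finset.mem_Icc, Finset.mem_range] at hn ⊢
          omega
        · intro n _ _
          have := hw (n % q)
          have := abs_nonneg C
          split_ifs <;> linarith
    _ ≤ M * |C| + (N / q + 1 : ℕ) * (ε * q) := by
        rw [Finset.sum_add_distrib, hper]
        exact add_le_add (hS0 _) (by gcongr)
    _ ≤ M * |C| + (ε * N + ε * q) := by
        have : ((q * (N / q) : ℕ) : ℝ) ≤ N := by exact_mod_cast Nat.mul_div_le N q
        push_cast at this ⊢
        nlinarith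
    _ ≤ 2 * ε * N := by linarith


theorem case_conv (T : unitInterval → unitInterval) (hT : Continuous T) (f : C(unitInterval, ℂ))
    (x l : unitInterval) (j : ℕ)
    (h : Tendsto (fun n => T^[2^j*n] x) atTop (𝓝 l)) :
    Tendsto (fun n => ‖f (T^[n] x) - f (T^[n % 2^j] l)‖) atTop (𝓝 0) := by
  apply conv_of_res _ _ 0 (2^j) (by positivity)
  intro r hr
  have h1 : Tendsto (fun k => f (T^[r] (T^[2^j*k] x)) - f (T^[r] l)) atTop (𝓝 0) := by
    have h2 : Tendsto (fun k => f (T^[r] (T^[2^j*k] x))) atTop (𝓝 (f (T^[r] l))) :=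
      ((f.continuous.comp (hT.iterate r)).tendsto l).comp h
    simpa using h2.sub_const (f (T^[r] l))
  have h3 := h1.norm
  rw [norm_zero] at h3
  refine h3.congr ?_
  intro k
  have e1 : (0 + k * 2^j + r) % 2^j = r := by
    rw [zero_add, add_comm, Nat.add_mul_mod_self_right, Nat.mod_eq_of_lt hr]
  have e2 : T^[0 + k * 2^j + r] x = T^[r] (T^[2^j*k] x) := by
    rw [← Function.iterate_add_apply]
    exact congrArg (fun m => T^[m] x) (by ring)
  rw [e1, e2]

theorem alt_parity {X : Type*} [LinearOrder X] (y : ℕ → X) (z : X) (M : ℕ)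
    (h : ∀ n ≥ M, y n ≠ z ∧ (y n < z ↔ z < y (n+1))) :
    ∃ e, e < 2 ∧ ∀ n ≥ M, (n % 2 = e → y n < z) ∧ (n % 2 ≠ e → z < y n) := by
  have key : ∀ n ≥ M, (y n < z ∧ z < y (n+1)) ∨ (z < y n ∧ y (n+1) < z) := by
    intro n hn
    rcases lt_or_gt_of_ne (h n hn).1 with h1 | h1
    · exact Or.inl ⟨h1, (h n hn).2.1 h1⟩
    · refine Or.inr ⟨h1, ?_⟩
      rcases lt_or_gt_of_ne (h (n+1) (by omega)).1 with h2 | h2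
      · exact h2
      · exact absurd ((h n hn).2.2 h2) (not_lt.mpr h1.le)
  rcases lt_or_gt_of_ne (h M le_rfl).1 with h0 | h0
  · refine ⟨M % 2, Nat.mod_lt _ (by norm_num), ?_⟩
    intro n hn
    induction n, hn using Nat.le_induction with
    | base => exact ⟨fun _ => h0, fun h => absurd rfl h⟩
    | succ n hn ih =>
      rcases key n hn with k | k
      · have : n % 2 = M % 2 := by
          by_contra hc
          exact absurd (ih.2 hc) (not_lt.mpr k.1.le)
        exact ⟨fun h => by omega, fun _ => k.2⟩
      · have : n % 2 ≠ M % 2 := by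
          intro hc
          exact absurd (ih.1 hc) (not_lt.mpr k.1.le)
        exact ⟨fun _ => k.2, fun h => by omega⟩
  · refine ⟨(M+1) % 2, Nat.mod_lt _ (by norm_num), ?_⟩
    intro n hn
    induction n, hn using Nat.le_induction with
    | base => exact ⟨fun h => by omega, fun _ => h0⟩
    | succ n hn ih =>
      rcases key n hn with k | k
      · have : n % 2 = (M+1) % 2 := by
          by_contra hc
          exact absurd (ih.2 hc) (not_lt.mpr k.1.le)
        exact ⟨fun h => by omega, fun _ => k.2⟩
      · have : n % 2 ≠ (M+1) % 2 := by
          intro hc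
          exact absurd (ih.1 hc) (not_lt.mpr k.1.le)
        exact ⟨fun _ => k.2, fun h => by omega⟩

theorem sep_pair (T : unitInterval → unitInterval) (hT : Continuous T) (hN : NoHS T)
    (x : unitInterval)
    (hno : ∀ (j r : ℕ) (l : unitInterval), ¬ Tendsto (fun n => T^[2^j*n+r] x) atTop (𝓝 l)) (k : ℕ) :
    ∀ r r' : ℕ, r % 2^k ≠ r' % 2^k → ∃ M : ℕ,
      (∀ n n', M ≤ n → M ≤ n' → n % 2^k = r % 2^k → n' % 2^k = r' % 2^k → T^[n] x < T^[n'] x) ∨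
      (∀ n n', M ≤ n → M ≤ n' → n % 2^k = r % 2^k → n' % 2^k = r' % 2^k → T^[n'] x < T^[n] x) := by
  induction k with
  | zero => intro r r' h; simp [Nat.mod_one] at h
  | succ k ih =>
    intro r r' h
    have down : ∀ a b : ℕ, a % 2^(k+1) = b % 2^(k+1) → a % 2^k = b % 2^k := by
      intro a b hab
      exact Nat.ModEq.of_dvd (pow_dvd_pow 2 (Nat.le_succ k)) hab
    by_cases hk : r % 2^k = r' % 2^k
    · set ρ := r % 2^k with hρ
      obtain ⟨z, M, hz⟩ := alt_main (T^[2^k]) (hT.iterate _) (hN.iter (2^k) Nat.one_le_two_pow)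
        (fun n => T^[2^k*n+ρ] x) (by
          intro n
          rw [← Function.iterate_add_apply]
          exact congrArg (fun m => T^[m] x) (by ring)) (by
          rintro ⟨l, hl⟩
          exact hno k ρ l hl)
      obtain ⟨e, he2, he⟩ := alt_parity _ z M hz
      have bit : ∀ a b : ℕ, a % 2^(k+1) = b % 2^(k+1) → (a / 2^k) % 2 = (b / 2^k) % 2 := by
        intro a b hab
        have h1 := down a b hab
        rw [Nat.mod_pow_succ, Nat.mod_pow_succ, h1] at hab
        have h2 := Nat.add_left_cancel hab
        exact Nat.eq_of_mul_eq_mul_left (by positivity) h2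
      have hb : (r / 2^k) % 2 ≠ (r' / 2^k) % 2 := by
        intro hc
        apply h
        rw [Nat.mod_pow_succ, Nat.mod_pow_succ, hc, ← hk]
      have dec : ∀ n, n % 2^k = ρ → 2^k * (n / 2^k) + ρ = n := by
        intro n hn
        rw [← hn]; exact Nat.div_add_mod n (2^k)
      have big : ∀ n, 2^k * M ≤ n → M ≤ n / 2^k := by
        intro n hn
        rw [Nat.le_div_iff_mul_le (by positivity), mul_comm]; exact hn
      by_cases hr : (r / 2^k) % 2 = e
      · refine ⟨2^k * M, Or.inl ?_⟩
        intro n n' hn hn' h1 h2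
        have a1 := (he (n / 2^k) (big n hn)).1 ((bit _ _ h1).trans hr)
        have a2 := (he (n' / 2^k) (big n' hn')).2 (by rw [bit _ _ h2, ← hr]; exact hb.symm)
        rw [dec n (down _ _ h1)] at a1
        rw [dec n' ((down _ _ h2).trans hk.symm)] at a2
        exact a1.trans a2
      · refine ⟨2^k * M, Or.inr ?_⟩
        intro n n' hn hn' h1 h2
        have a1 := (he (n / 2^k) (big n hn)).2 (by rw [bit _ _ h1]; exact hr)
        have a2 := (he (n' / 2^k) (big n' hn')).1 (by rw [bit _ _ h2]; omega)
        rw [dec n (down _ _ h1)] at a1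
        rw [dec n' ((down _ _ h2).trans hk.symm)] at a2
        exact a2.trans a1
    · obtain ⟨M, hM⟩ := ih r r' hk
      refine ⟨M, ?_⟩
      rcases hM with hM | hM
      · exact Or.inl fun n n' a b c d => hM n n' a b (down _ _ c) (down _ _ d)
      · exact Or.inr fun n n' a b c d => hM n n' a b (down _ _ c) (down _ _ d)

theorem sep_widths (X : ℕ → ℝ) (h0 : ∀ n, 0 ≤ X n) (h1 : ∀ n, X n ≤ 1) (q M : ℕ) (hq : 0 < q)
    (hsep : ∀ r r' : ℕ, r < q → r' < q → r ≠ r' →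
      (∀ n n', M ≤ n → M ≤ n' → n % q = r → n' % q = r' → X n < X n') ∨
      (∀ n n', M ≤ n → M ≤ n' → n % q = r → n' % q = r' → X n' < X n)) :
    ∃ d : ℕ → ℝ, (∀ r, 0 ≤ d r) ∧ ∑ r ∈ Finset.range q, d r ≤ 1 ∧
      ∀ n n', M ≤ n → M ≤ n' → n % q = n' % q → |X n - X n'| ≤ d (n % q) := by
  set A : ℕ → Set ℝ := fun r => X '' {n | M ≤ n ∧ n % q = r} with hA
  have hb : ∀ r, BddBelow (A r) := fun r => ⟨0, by rintro _ ⟨n, _, rfl⟩; exact h0 n⟩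
  have ha : ∀ r, BddAbove (A r) := fun r => ⟨1, by rintro _ ⟨n, _, rfl⟩; exact h1 n⟩
  have hne : ∀ r, r < q → (A r).Nonempty := by
    intro r hr
    refine ⟨_, q * M + r, ⟨?_, ?_⟩, rfl⟩
    · nlinarith
    · rw [Nat.mul_add_mod, Nat.mod_eq_of_lt hr]
  refine ⟨fun r => sSup (A r) - sInf (A r), ?_, ?_, ?_⟩
  · intro r
    exact sub_nonneg.mpr (Real.sInf_le_sSup _ (hb r) (ha r))
  · have ord : ∀ r r', r < q → r' < q → (∀ n n', M ≤ n → M ≤ n' → n % q = r → n' % q = r' → X n < X n') →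
        sSup (A r) ≤ sInf (A r') := by
      intro r r' hr hr' h
      apply csSup_le (hne r hr)
      rintro _ ⟨n, ⟨hn, hn2⟩, rfl⟩
      apply le_csInf (hne r' hr')
      rintro _ ⟨n', ⟨hn', hn2'⟩, rfl⟩
      exact (h n n' hn hn' hn2 hn2').le
    have hdisj : Set.PairwiseDisjoint (↑(Finset.range q)) (fun r => Set.Ioo (sInf (A r)) (sSup (A r))) := by
      intro r hr r' hr' hrr
      simp only [Finset.coe_range, Set.mem_Iio] at hr hr'
      rw [Function.onFun, Set.disjoint_left]
      rintro y ⟨y1, y2⟩ ⟨y3, y4⟩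
      rcases hsep r r' hr hr' hrr with h | h
      · have := ord r r' hr hr' h
        linarith
      · have := ord r' r hr' hr (fun n n' a b c d => h n' n b a d c)
        linarith
    have hvol := MeasureTheory.measure_biUnion_finset (μ := MeasureTheory.volume) hdisj
      (fun r _ => measurableSet_Ioo)
    have hsub : (⋃ r ∈ Finset.range q, Set.Ioo (sInf (A r)) (sSup (A r))) ⊆ Set.Icc (0:ℝ) 1 := by
      intro y hy
      simp only [Set.mem_iUnion, Finset.mem_range] at hy
      obtain ⟨r, hr, y1, y2⟩ := hy
      constructor
      · refine le_trans ?_ y1.le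
        apply le_csInf (hne r hr)
        rintro _ ⟨n, _, rfl⟩; exact h0 n
      · refine y2.le.trans ?_
        apply csSup_le (hne r hr)
        rintro _ ⟨n, _, rfl⟩; exact h1 n
    have hle := MeasureTheory.measure_mono (μ := MeasureTheory.volume) hsub
    rw [hvol] at hle
    simp only [Real.volume_Ioo, Real.volume_Icc, sub_zero] at hle
    rw [← ENNReal.ofReal_sum_of_nonneg] at hle
    · exact (ENNReal.ofReal_le_ofReal_iff zero_le_one).1 hle
    · intro r _
      exact sub_nonneg.mpr (Real.sInf_le_sSup _ (hb r) (ha r))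
  · intro n n' hn hn' hnn
    have m1 : X n ∈ A (n % q) := ⟨n, ⟨hn, rfl⟩, rfl⟩
    have m2 : X n' ∈ A (n % q) := ⟨n', ⟨hn', hnn.symm⟩, rfl⟩
    have a1 := csInf_le (hb _) m1
    have a2 := csInf_le (hb _) m2
    have a3 := le_csSup (ha _) m1
    have a4 := le_csSup (ha _) m2
    rw [abs_le]
    constructor <;> simp only <;> linarith

theorem case_sep (T : unitInterval → unitInterval) (hT : Continuous T) (hN : NoHS T)
    (x : unitInterval)
    (hno : ∀ (j r : ℕ) (l : unitInterval), ¬ Tendsto (fun n => T^[2^j*n+r] x) atTop (𝓝 l))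
    (f : C(unitInterval, ℂ)) (ε : ℝ) (hε : 0 < ε) :
    ∃ (k : ℕ) (c : ℕ → ℂ), (∀ n, c n = c (n % 2^k)) ∧
      ∀ᶠ N : ℕ in atTop, ∑ n ∈ Finset.Icc 1 N, ‖f (T^[n] x) - c n‖ ≤ ε * N := by
  set B := ‖f‖ with hB
  have hB0 : 0 ≤ B := norm_nonneg _
  have hfB : ∀ y z, ‖f y - f z‖ ≤ 2 * B := by
    intro y z
    have := norm_sub_le (f y) (f z)
    have := f.norm_coe_le_norm y
    have := f.norm_coe_le_norm z
    linarith
  have huc := CompactSpace.uniformContinuous_of_continuous f.continuous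
  obtain ⟨δ, hδ, hfδ⟩ := Metric.uniformContinuous_iff.1 huc (ε/4) (by positivity)
  obtain ⟨k, hk⟩ := pow_unbounded_of_one_lt (2 * B / δ / (ε/4)) (one_lt_two)
  set q := 2^k with hqdef
  have hq : 0 < q := by positivity
  -- uniform M
  have hM : ∃ M : ℕ, ∀ r r' : ℕ, r < q → r' < q → r ≠ r' →
      (∀ n n', M ≤ n → M ≤ n' → n % q = r → n' % q = r' → (T^[n] x : ℝ) < T^[n'] x) ∨
      (∀ n n', M ≤ n → M ≤ n' → n % q = r → n' % q = r' → (T^[n'] x : ℝ) < T^[n] x) := by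
    have h1 : ∀ p : ℕ × ℕ, ∃ M : ℕ, p.1 < q → p.2 < q → p.1 ≠ p.2 →
        (∀ n n', M ≤ n → M ≤ n' → n % q = p.1 → n' % q = p.2 → (T^[n] x : ℝ) < T^[n'] x) ∨
        (∀ n n', M ≤ n → M ≤ n' → n % q = p.1 → n' % q = p.2 → (T^[n'] x : ℝ) < T^[n] x) := by
      rintro ⟨r, r'⟩
      by_cases h : r < q ∧ r' < q ∧ r ≠ r'
      · obtain ⟨a, b, c⟩ := h
        have e1 : r % 2^k = r := Nat.mod_eq_of_lt a
        have e2 : r' % 2^k = r' := Nat.mod_eq_of_lt b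
        obtain ⟨M, hM⟩ := sep_pair T hT hN x hno k r r' (by rw [e1, e2]; exact c)
        rw [e1, e2] at hM
        exact ⟨M, fun _ _ _ => hM⟩
      · exact ⟨0, fun a b c => absurd ⟨a, b, c⟩ h⟩
    choose g hg using h1
    refine ⟨(Finset.range q ×ˢ Finset.range q).sup g, ?_⟩
    intro r r' hr hr' hrr
    have hle : g (r, r') ≤ (Finset.range q ×ˢ Finset.range q).sup g :=
      Finset.le_sup (by simp [hr, hr'])
    rcases hg (r, r') hr hr' hrr with h | h
    · exact Or.inl fun n n' a b => h n n' (hle.trans a) (hle.trans b)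
    · exact Or.inr fun n n' a b => h n n' (hle.trans a) (hle.trans b)
  obtain ⟨M, hM⟩ := hM
  obtain ⟨d, hd0, hd1, hd⟩ := sep_widths (fun n => (T^[n] x : ℝ)) (fun n => (T^[n] x).2.1)
    (fun n => (T^[n] x).2.2) q M hq hM
  refine ⟨k, fun n => f (T^[q * M + n % q] x), ?_, ?_⟩
  · intro n
    simp only [← hqdef, Nat.mod_mod]
  · have hw := dens_bound (fun n => ‖f (T^[n] x) - f (T^[q * M + n % q] x)‖) (2*B)
      (fun n => hfB _ _) q hq (fun r => ε/4 + 2*B/δ * d r)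
      (fun r => by have := hd0 r; positivity) M ?_ (ε/2) (by positivity) ?_
    · filter_upwards [hw] with N hN
      refine hN.trans (le_of_eq ?_)
      ring
    · intro n hn
      have hdn := hd n (q * M + n % q) hn (by nlinarith [Nat.zero_le (n % q)])
        (by rw [Nat.mul_add_mod, Nat.mod_mod])
      by_cases hlt : dist (T^[n] x) (T^[q * M + n % q] x) < δ
      · have := hfδ hlt
        rw [dist_eq_norm] at this
        have h2 : 0 ≤ 2*B/δ * d (n % q) := by have := hd0 (n % q); positivity
        linarith
      · push Not at hlt
        rw [Subtype.dist_eq, Real.dist_eq] at hlt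
        have h3 : δ ≤ d (n % q) := hlt.trans hdn
        have h4 : 2 * B ≤ 2*B/δ * d (n % q) := by
          rw [div_mul_eq_mul_div, le_div_iff₀ hδ]
          exact mul_le_mul_of_nonneg_left h3 (by positivity)
        have := hfB (T^[n] x) (T^[q * M + n % q] x)
        linarith
    · rw [Finset.sum_add_distrib, ← Finset.mul_sum]
      simp only [Finset.sum_const, Finset.card_range, nsmul_eq_mul]
      have h5 : 2*B/δ * ∑ r ∈ Finset.range q, d r ≤ 2*B/δ :=
        mul_le_of_le_one_right (by positivity) hd1
      have h6 : 2*B/δ ≤ (q:ℝ) * (ε/4) := by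
        rw [div_lt_iff₀ (by positivity)] at hk
        rw [hqdef]; push_cast; exact hk.le
      linarith

theorem interval_mobius_core (T : unitInterval → unitInterval) (hT : Continuous T)
    (hent : Dynamics.coverEntropy T Set.univ = 0) (f : C(unitInterval, ℂ)) (x : unitInterval) :
    MVZ (fun n => f (T^[n] x) * (ArithmeticFunction.moebius n : ℂ)) := by
  have hN := noHS_of_entropy T hent
  apply approx_mvz (fun n => f (T^[n] x))
  intro ε hε
  by_cases hc : ∃ (j : ℕ) (l : unitInterval), Tendsto (fun n => T^[2^j*n] x) atTop (𝓝 l)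
  · obtain ⟨j, l, h⟩ := hc
    refine ⟨j, fun n => f (T^[n % 2^j] l), fun n => by simp only [Nat.mod_mod], ?_⟩
    have hconv := case_conv T hT f x l j h
    obtain ⟨M, hM⟩ := eventually_atTop.1 (hconv.eventually_le_const (half_pos hε))
    have hw := dens_bound (fun n => ‖f (T^[n] x) - f (T^[n % 2^j] l)‖) (2*‖f‖)
      (fun n => by
        have := norm_sub_le (f (T^[n] x)) (f (T^[n % 2^j] l))
        have := f.norm_coe_le_norm (T^[n] x)
        have := f.norm_coe_le_norm (T^[n % 2^j] l)
        linarith) 1 one_pos (fun _ => ε/2) (fun _ => by positivity) M (fun n hn => hM n hn)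
        (ε/2) (half_pos hε) (by simp)
    filter_upwards [hw] with N hN
    refine hN.trans (le_of_eq ?_)
    ring
  · apply case_sep T hT hN x _ f ε hε
    intro j r l hl
    apply hc
    refine ⟨j, T^[2^j * r - r] l, ?_⟩
    have h1 := (((hT.iterate (2^j * r - r)).tendsto l).comp hl)
    have h2 : Tendsto (fun n => T^[2^j * (n + r)] x) atTop (𝓝 (T^[2^j * r - r] l)) := by
      refine h1.congr ?_
      intro n
      simp only [Function.comp]
      rw [← Function.iterate_add_apply]
      refine congrArg (fun m => T^[m] x) ?_
      have : r ≤ 2^j * r := Nat.le_mul_of_pos_left r (by positivity)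
      rw [mul_add]
      omega
    exact (tendsto_add_atTop_iff_nat (f := fun n => T^[2^j * n] x) r).1 h2

/-- Every continuous map `T : [0,1] → [0,1]` with zero topological entropy is Möbius
orthogonal. -/
theorem zero_entropy_interval_map_mobius_orthogonal
    (T : I → I) (hT : Continuous T)
    (hent : Dynamics.coverEntropy T Set.univ = 0) :
    ∀ (f : C(I, ℂ)) (x : I),
      Tendsto
        (fun N : ℕ => (1 / (N : ℂ)) *
          ∑ n ∈ Finset.Icc 1 N, f (T^[n] x) * (ArithmeticFunction.moebius n : ℂ))
        atTop (nhds 0) := by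
  intro f x
  have h := interval_mobius_core T hT hent f x
  unfold MVZ at h
  refine h.congr ?_
  intro N
  rw [one_div, div_eq_mul_inv, mul_comm]
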